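/- arXiv:1109.3676 — 3 statements merged into one kernel-verified Lean document; each statement's English description precedes it below -/
import Mathlib

section
/- For every t > 0 one has μ(t) ≤ (1 − 2e^{−1})^{−1} t^{−2} φ'(t^{−1}); that is, the decreasing Lévy density of a subordinator is always bounded above by the expression t^{−2}φ'(t^{−1}) up to the universal constant (1 − 2/e)^{−1}. -/
open MeasureTheory Set Filter Topology

/-! Since `μ` is nonnegative and decreasing, `φ'(1/t) = ∫₀^∞ s e^{-s/t} μ(s) ds` is at least
`μ(t) ∫₀ᵗ s e^{-s/t} ds`, and the last integral equals `t² (1 - 2/e)`. -/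

lemma setIntegral_Ioc_mul_le_setIntegral_Ioi_mul {α : Type*} [LinearOrder α] [TopologicalSpace α]
    [OrderClosedTopology α] [MeasurableSpace α] [OpensMeasurableSpace α] {ν : Measure α}
    {w f : α → ℝ} {a t : α} (hw : IntegrableOn w (Ioc a t) ν) (hw_nonneg : ∀ s ∈ Ioi a, 0 ≤ w s)
    (hf : AntitoneOn f (Ioc a t)) (hf_nonneg : ∀ s ∈ Ioi a, 0 ≤ f s)
    (hwf : IntegrableOn (fun s ↦ w s * f s) (Ioi a) ν) :
    (∫ s in Ioc a t, w s ∂ν) * f t ≤ ∫ s in Ioi a, w s * f s ∂ν := by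
  calc (∫ s in Ioc a t, w s ∂ν) * f t
      = ∫ s in Ioc a t, w s * f t ∂ν := (integral_mul_const _ _).symm
    _ ≤ ∫ s in Ioc a t, w s * f s ∂ν :=
        setIntegral_mono_on (hw.mul_const _) (hwf.mono_set Ioc_subset_Ioi_self) measurableSet_Ioc
          fun s hs ↦ mul_le_mul_of_nonneg_left
            (hf hs (right_mem_Ioc.mpr (hs.1.trans_le hs.2)) hs.2) (hw_nonneg s hs.1)
    _ ≤ ∫ s in Ioi a, w s * f s ∂ν :=
        setIntegral_mono_set hwf
          (ae_restrict_of_forall_mem measurableSet_Ioi fun s hs ↦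
            mul_nonneg (hw_nonneg s hs) (hf_nonneg s hs))
          Ioc_subset_Ioi_self.eventuallyLE

lemma integrableOn_Ioi_mul_of_antitoneOn {ν : Measure ℝ} {w f : ℝ → ℝ} {a : ℝ}
    (hw : IntegrableOn w (Ioi a) ν) (hf : AntitoneOn f (Ici a))
    (hf_nonneg : ∀ s ∈ Ioi a, 0 ≤ f s) :
    IntegrableOn (fun s ↦ w s * f s) (Ioi a) ν := by
  have hf_meas : AEStronglyMeasurable f (ν.restrict (Ioi a)) :=
    (aemeasurable_restrict_of_antitoneOn measurableSet_Ioi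
      (hf.mono Ioi_subset_Ici_self)).aestronglyMeasurable
  refine Integrable.mul_bdd (c := f a) hw hf_meas ?_
  refine ae_restrict_of_forall_mem measurableSet_Ioi fun s hs ↦ ?_
  rw [Real.norm_of_nonneg (hf_nonneg s hs)]
  exact hf self_mem_Ici (Ioi_subset_Ici_self hs) (le_of_lt hs)

lemma integrableOn_Ioi_mul_exp_neg_mul {l : ℝ} (hl : 0 < l) :
    IntegrableOn (fun s : ℝ ↦ s * Real.exp (-(l * s))) (Ioi 0) := by
  simpa using integrableOn_rpow_mul_exp_neg_mul_rpow (s := 1) (p := 1) (by norm_num) one_pos hl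

lemma integrableOn_Ioi_mul_exp_neg_mul_mul_of_antitoneOn {f : ℝ → ℝ} {a l : ℝ} (ha : 0 < a)
    (hl : 0 < l) (hf : AntitoneOn f (Ioi 0)) (hf_nonneg : ∀ s ∈ Ioi 0, 0 ≤ f s)
    (hf_int : IntegrableOn (fun s ↦ s * f s) (Ioc 0 a)) :
    IntegrableOn (fun s ↦ s * Real.exp (-(l * s)) * f s) (Ioi 0) := by
  have near_zero : IntegrableOn (fun s ↦ s * Real.exp (-(l * s)) * f s) (Ioc 0 a) := by
    have hexp : IntegrableOn (fun s ↦ Real.exp (-(l * s)) * (s * f s)) (Ioc 0 a) := by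
      refine Integrable.bdd_mul (c := 1) hf_int (by fun_prop) ?_
      refine ae_restrict_of_forall_mem measurableSet_Ioc fun s hs ↦ ?_
      rw [Real.norm_of_nonneg (Real.exp_nonneg _), Real.exp_le_one_iff, neg_nonpos]
      exact mul_nonneg hl.le hs.1.le
    exact hexp.congr_fun (fun s _ ↦ by ring) measurableSet_Ioc
  have near_infinity : IntegrableOn (fun s ↦ s * Real.exp (-(l * s)) * f s) (Ioi a) :=
    integrableOn_Ioi_mul_of_antitoneOn
      ((integrableOn_Ioi_mul_exp_neg_mul hl).mono_set (Ioi_subset_Ioi ha.le))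
      (hf.mono fun _ hs ↦ ha.trans_le hs) fun s hs ↦ hf_nonneg s (ha.trans hs)
  rw [← Ioc_union_Ioi_eq_Ioi ha.le]
  exact near_zero.union near_infinity

lemma integral_mul_exp_neg_mul {l : ℝ} (hl : l ≠ 0) (a b : ℝ) :
    ∫ s in a..b, s * Real.exp (-(l * s)) =
      ((1 + l * a) * Real.exp (-(l * a)) - (1 + l * b) * Real.exp (-(l * b))) / l ^ 2 := by
  have hderiv (s : ℝ) : HasDerivAt (fun s ↦ -((1 + l * s) * Real.exp (-(l * s))) / l ^ 2)
      (s * Real.exp (-(l * s))) s := by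
    have hlin : HasDerivAt (fun s ↦ l * s) l s := by
      simpa using (hasDerivAt_id s).const_mul l
    refine (((hlin.const_add 1).mul hlin.fun_neg.exp).neg.div_const (l ^ 2)).congr_deriv ?_
    field_simp
    ring
  rw [intervalIntegral.integral_eq_sub_of_hasDerivAt (fun s _ ↦ hderiv s)
    (Continuous.intervalIntegrable (by fun_prop) _ _)]
  ring

lemma setIntegral_Ioc_mul_exp_neg_inv_mul {t : ℝ} (ht : 0 < t) :
    ∫ s in Ioc 0 t, s * Real.exp (-(t⁻¹ * s)) = (1 - 2 * Real.exp (-1)) * t ^ 2 := by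
  rw [← intervalIntegral.integral_of_le ht.le, integral_mul_exp_neg_mul (inv_ne_zero ht.ne'),
    inv_mul_cancel₀ ht.ne', mul_zero, neg_zero, Real.exp_zero, inv_pow, div_inv_eq_mul]
  ring

theorem levy_density_upper_bound_general {μ : ℝ → ℝ} {a : ℝ} (ha : 0 < a)
    (hμ_nonneg : ∀ s ∈ Ioi 0, 0 ≤ μ s) (hμ : AntitoneOn μ (Ioi 0))
    (hμ_int : IntegrableOn (fun s ↦ s * μ s) (Ioc 0 a)) {t : ℝ} (ht : 0 < t) :
    μ t ≤ (1 - 2 * Real.exp (-1))⁻¹ *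
      (t ^ (-2 : ℝ) * ∫ s in Ioi (0 : ℝ), s * Real.exp (-(t⁻¹ * s)) * μ s) := by
  have hl : 0 < t⁻¹ := inv_pos.mpr ht
  have hconst : 0 < 1 - 2 * Real.exp (-1) := by linarith [Real.exp_neg_one_lt_half]
  have hpow : t ^ (-2 : ℝ) = (t ^ 2)⁻¹ := by rw [Real.rpow_neg ht.le, Real.rpow_two]
  have htrunc : (1 - 2 * Real.exp (-1)) * t ^ 2 * μ t ≤
      ∫ s in Ioi (0 : ℝ), s * Real.exp (-(t⁻¹ * s)) * μ s := by
    rw [← setIntegral_Ioc_mul_exp_neg_inv_mul ht]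
    exact setIntegral_Ioc_mul_le_setIntegral_Ioi_mul
      ((integrableOn_Ioi_mul_exp_neg_mul hl).mono_set Ioc_subset_Ioi_self)
      (fun s hs ↦ mul_nonneg (le_of_lt hs) (Real.exp_nonneg _))
      (hμ.mono Ioc_subset_Ioi_self) hμ_nonneg
      (integrableOn_Ioi_mul_exp_neg_mul_mul_of_antitoneOn ha hl hμ hμ_nonneg hμ_int)
  rwa [hpow, ← mul_assoc, ← mul_inv, le_inv_mul_iff₀ (by positivity)]

lemma integrableOn_Ioc_mul_of_integrableOn_Ioi_min_mul {f : ℝ → ℝ}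
    (hf : IntegrableOn (fun t ↦ min 1 t * f t) (Ioi 0)) :
    IntegrableOn (fun t ↦ t * f t) (Ioc 0 1) :=
  (hf.mono_set Ioc_subset_Ioi_self).congr_fun
    (fun t ht ↦ by simp only [min_eq_right ht.2]) measurableSet_Ioc

/-- Upper bound for the decreasing Lévy density of a subordinator:
`μ(t) ≤ (1 - 2/e)⁻¹ t⁻² φ'(t⁻¹)` for every `t > 0`. -/
theorem levy_density_upper_bound
    (μ φ φ' : ℝ → ℝ)
    (hμpos : ∀ t, 0 < t → 0 < μ t)
    (hμdec : ∀ s t, 0 < s → s ≤ t → μ t ≤ μ s)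
    (hμint : IntegrableOn (fun t => min 1 t * μ t) (Ioi 0))
    (hφ : ∀ l, 0 < l → φ l = ∫ t in Ioi (0:ℝ), (1 - Real.exp (-(l * t))) * μ t)
    (hφ' : ∀ l, 0 < l → φ' l = ∫ t in Ioi (0:ℝ), t * Real.exp (-(l * t)) * μ t) :
    ∀ t, 0 < t → μ t ≤ (1 - 2 * Real.exp (-1))⁻¹ * (t ^ (-2 : ℝ) * φ' t⁻¹) := by
  intro t ht
  rw [hφ' _ (inv_pos.mpr ht)]
  exact levy_density_upper_bound_general one_pos (fun s hs ↦ (hμpos s hs).le)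
    (fun s hs r _ hsr ↦ hμdec s r hs hsr)
    (integrableOn_Ioc_mul_of_integrableOn_Ioi_min_mul hμint) ht
end

section
/- Assume condition (A-1) holds with some index α ∈ [0,2). Then μ(t) ≍ t^{−2} φ'(t^{−1}) as t → 0+; i.e. there exist constants 0 < c ≤ C and t₀ > 0 such that c t^{−2} φ'(t^{−1}) ≤ μ(t) ≤ C t^{−2} φ'(t^{−1}) for all t ∈ (0, t₀). -/
open MeasureTheory Set Filter Topology

/-!
Cutting the integral `φ'(l) = ∫ s e^{-ls} μ(s) ds` at `s = t` and using the monotonicity of `μ`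
gives `μ(t) e^{-lt} t² / 2 ≤ φ'(l)` from the part `s ≤ t`, and
`φ'(r) ≤ e^{lt} φ'(l) + μ(t) / r²` by comparing `e^{-rs}` with `e^{lt} e^{-ls}` for `s ≤ t` and
`μ(s)` with `μ(t)` for `s ≥ t`. At `l = 1 / t` the first is the upper bound on `μ`. For the lower
bound take `r = x / t`: as soon as `φ'(lx) ≥ C φ'(l)` with `C > e`, the term `e φ'(1 / t)` can be
absorbed. Regular variation of negative index gives such a growth with some `C > 1`, and
iterating it makes `C` as large as needed.
-/

/-- A decreasing density on `(0, ∞)` of the Lévy measure of a subordinator. Positivity is not a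
field, since decreasing integrable functions are nonnegative. -/
structure IsDecreasingLevyDensity (μ : ℝ → ℝ) : Prop where
  antitoneOn : AntitoneOn μ (Ioi 0)
  integrableOn_min_one_mul : IntegrableOn (fun t => min 1 t * μ t) (Ioi 0)

/-- The derivative at `l > 0` of the Bernstein function `∫ (1 - e^{-lt}) μ(t) dt` with Lévy
density `μ`, given by its integral formula. -/
noncomputable def bernsteinDeriv (μ : ℝ → ℝ) (l : ℝ) : ℝ :=
  ∫ t in Ioi (0 : ℝ), t * Real.exp (-(l * t)) * μ t

lemma nonneg_of_antitoneOn_of_integrableOn_Ioi {f : ℝ → ℝ} {a t : ℝ}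
    (hf : AntitoneOn f (Ioi a)) (hint : IntegrableOn f (Ioi a)) (ht : a < t) : 0 ≤ f t := by
  by_contra! hneg
  have hconst : IntegrableOn (fun _ => f t) (Ioi t) := by
    refine Integrable.mono (hint.mono_set (Ioi_subset_Ioi ht.le)) aestronglyMeasurable_const ?_
    filter_upwards [ae_restrict_mem measurableSet_Ioi] with s (hs : t < s)
    have hst : f s ≤ f t := hf ht (ht.trans hs) hs.le
    rw [Real.norm_of_nonpos hneg.le, Real.norm_of_nonpos (hst.trans hneg.le)]
    exact neg_le_neg hst
  simp [integrableOn_const_iff, hneg.ne] at hconst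

lemma mul_exp_neg_mul_le {l t : ℝ} (hl : 0 < l) (ht : 0 ≤ t) :
    t * Real.exp (-(l * t)) ≤ max 1 l⁻¹ * min 1 t := by
  have hlt : l * t ≤ Real.exp (l * t) := by linarith [Real.add_one_le_exp (l * t)]
  have hinv : t * Real.exp (-(l * t)) ≤ l⁻¹ := by
    rwa [Real.exp_neg, ← div_eq_mul_inv, div_le_iff₀ (Real.exp_pos _), le_inv_mul_iff₀ hl]
  have hself : t * Real.exp (-(l * t)) ≤ t :=
    mul_le_of_le_one_right ht (Real.exp_le_one_iff.2 (neg_nonpos.2 (by positivity)))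
  rcases le_total 1 t with h | h
  · rw [min_eq_left h, mul_one]
    exact hinv.trans (le_max_right _ _)
  · rw [min_eq_right h]
    exact hself.trans (le_mul_of_one_le_left ht (le_max_left _ _))

lemma integrableOn_mul_exp_neg_mul_mul {μ : ℝ → ℝ} {l : ℝ}
    (hμ : IntegrableOn (fun t => min 1 t * μ t) (Ioi 0)) (hl : 0 < l) :
    IntegrableOn (fun t => t * Real.exp (-(l * t)) * μ t) (Ioi 0) := by
  have hbound : ∀ᵐ t ∂volume.restrict (Ioi (0 : ℝ)),
      ‖t * Real.exp (-(l * t)) / min 1 t‖ ≤ max 1 l⁻¹ := by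
    filter_upwards [ae_restrict_mem measurableSet_Ioi] with t (ht : 0 < t)
    have hmin : 0 < min 1 t := lt_min one_pos ht
    rw [Real.norm_of_nonneg (by positivity), div_le_iff₀ hmin]
    exact mul_exp_neg_mul_le hl ht.le
  have hmeas : Measurable fun t : ℝ => t * Real.exp (-(l * t)) / min 1 t := by fun_prop
  refine (Integrable.bdd_mul hμ hmeas.aestronglyMeasurable hbound).congr ?_
  filter_upwards [ae_restrict_mem measurableSet_Ioi] with t (ht : 0 < t)
  have hmin : 0 < min 1 t := lt_min one_pos ht
  rw [← mul_assoc, div_mul_cancel₀ _ hmin.ne']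

lemma integral_mul_exp_neg_mul_Ioi {r : ℝ} (hr : 0 < r) :
    ∫ t in Ioi (0 : ℝ), t * Real.exp (-(r * t)) = (r ^ 2)⁻¹ := by
  have h := Real.integral_rpow_mul_exp_neg_mul_Ioi (a := 2) two_pos hr
  simpa [show (2 : ℝ) - 1 = 1 by norm_num] using h

lemma integrableOn_mul_exp_neg_mul_Ioi {r : ℝ} (hr : 0 < r) :
    IntegrableOn (fun t => t * Real.exp (-(r * t))) (Ioi 0) :=
  .of_integral_ne_zero (by rw [integral_mul_exp_neg_mul_Ioi hr]; positivity)

namespace IsDecreasingLevyDensity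

variable {μ : ℝ → ℝ} {l r t x : ℝ}

lemma nonneg (hμ : IsDecreasingLevyDensity μ) (ht : 0 < t) : 0 ≤ μ t := by
  have hint : IntegrableOn μ (Ioi 1) := by
    refine (hμ.integrableOn_min_one_mul.mono_set (Ioi_subset_Ioi zero_le_one)).congr_fun ?_
      measurableSet_Ioi
    intro s (hs : 1 < s)
    simp only [min_eq_left hs.le, one_mul]
  have hlarge : 0 ≤ μ (max 2 t) :=
    nonneg_of_antitoneOn_of_integrableOn_Ioi (hμ.antitoneOn.mono (Ioi_subset_Ioi zero_le_one)) hint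
      (one_lt_two.trans_le (le_max_left _ _))
  exact hlarge.trans (hμ.antitoneOn ht (lt_max_of_lt_right ht) (le_max_right _ _))

lemma integrand_nonneg (hμ : IsDecreasingLevyDensity μ) (ht : 0 < t) :
    0 ≤ t * Real.exp (-(l * t)) * μ t :=
  mul_nonneg (by positivity) (hμ.nonneg ht)

lemma integrableOn_integrand (hμ : IsDecreasingLevyDensity μ) (hl : 0 < l) :
    IntegrableOn (fun t => t * Real.exp (-(l * t)) * μ t) (Ioi 0) :=
  integrableOn_mul_exp_neg_mul_mul hμ.integrableOn_min_one_mul hl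

lemma bernsteinDeriv_nonneg (hμ : IsDecreasingLevyDensity μ) : 0 ≤ bernsteinDeriv μ l :=
  setIntegral_nonneg measurableSet_Ioi fun _ => hμ.integrand_nonneg

lemma mul_le_bernsteinDeriv (hμ : IsDecreasingLevyDensity μ) (hl : 0 < l) (ht : 0 < t) :
    Real.exp (-(l * t)) * μ t * (t ^ 2 / 2) ≤ bernsteinDeriv μ l := by
  have hint := hμ.integrableOn_integrand hl
  calc Real.exp (-(l * t)) * μ t * (t ^ 2 / 2)
      = ∫ s in Ioc 0 t, Real.exp (-(l * t)) * μ t * s := by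
        rw [integral_const_mul, ← intervalIntegral.integral_of_le ht.le, integral_id]
        ring
    _ ≤ ∫ s in Ioc 0 t, s * Real.exp (-(l * s)) * μ s := by
        refine setIntegral_mono_on (Continuous.integrableOn_Ioc (by fun_prop))
          (hint.mono_set Ioc_subset_Ioi_self) measurableSet_Ioc fun s ⟨hs, hst⟩ => ?_
        have hμst : μ t ≤ μ s := hμ.antitoneOn hs ht hst
        have hμt : 0 ≤ μ t := hμ.nonneg ht
        calc Real.exp (-(l * t)) * μ t * s ≤ Real.exp (-(l * s)) * μ s * s := by gcongr
          _ = s * Real.exp (-(l * s)) * μ s := by ring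
    _ ≤ bernsteinDeriv μ l :=
        setIntegral_mono_set hint
          ((ae_restrict_iff' measurableSet_Ioi).2 (.of_forall fun _ => hμ.integrand_nonneg))
          Ioc_subset_Ioi_self.eventuallyLE

lemma integrand_le (hμ : IsDecreasingLevyDensity μ) (hl : 0 < l) (hr : 0 < r) (ht : 0 < t)
    {s : ℝ} (hs : 0 < s) :
    s * Real.exp (-(r * s)) * μ s ≤
      Real.exp (l * t) * (s * Real.exp (-(l * s)) * μ s) +
        μ t * (s * Real.exp (-(r * s))) := by
  have hμs := hμ.nonneg hs
  have hμt := hμ.nonneg ht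
  rcases le_total s t with hst | hts
  · have hexp : Real.exp (-(r * s)) ≤ Real.exp (l * t) * Real.exp (-(l * s)) := by
      rw [← Real.exp_add, Real.exp_le_exp]
      nlinarith [mul_pos hr hs]
    calc s * Real.exp (-(r * s)) * μ s
        ≤ s * (Real.exp (l * t) * Real.exp (-(l * s))) * μ s := by gcongr
      _ = Real.exp (l * t) * (s * Real.exp (-(l * s)) * μ s) := by ring
      _ ≤ _ := le_add_of_nonneg_right (by positivity)
  · have hμts : μ s ≤ μ t := hμ.antitoneOn ht hs hts
    calc s * Real.exp (-(r * s)) * μ s ≤ s * Real.exp (-(r * s)) * μ t := by gcongr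
      _ = μ t * (s * Real.exp (-(r * s))) := by ring
      _ ≤ _ := le_add_of_nonneg_left (by positivity)

lemma bernsteinDeriv_le (hμ : IsDecreasingLevyDensity μ) (hl : 0 < l) (hr : 0 < r) (ht : 0 < t) :
    bernsteinDeriv μ r ≤ Real.exp (l * t) * bernsteinDeriv μ l + μ t * (r ^ 2)⁻¹ := by
  have hleft := (hμ.integrableOn_integrand hl).const_mul (Real.exp (l * t))
  have hright := (integrableOn_mul_exp_neg_mul_Ioi hr).const_mul (μ t)
  rw [bernsteinDeriv, bernsteinDeriv, ← integral_mul_exp_neg_mul_Ioi hr, ← integral_const_mul,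
    ← integral_const_mul, ← integral_add hleft hright]
  exact setIntegral_mono_on (hμ.integrableOn_integrand hr) (hleft.add hright) measurableSet_Ioi
    fun _ => hμ.integrand_le hl hr ht

lemma le_rpow_mul_bernsteinDeriv_inv (hμ : IsDecreasingLevyDensity μ) (ht : 0 < t) :
    μ t ≤ 2 * Real.exp 1 * (t ^ (-2 : ℝ) * bernsteinDeriv μ t⁻¹) := by
  have h := hμ.mul_le_bernsteinDeriv (inv_pos.2 ht) ht
  rw [inv_mul_cancel₀ ht.ne'] at h
  rw [Real.rpow_neg ht.le, Real.rpow_two]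
  calc μ t = 2 * Real.exp 1 * ((t ^ 2)⁻¹ * (Real.exp (-1) * μ t * (t ^ 2 / 2))) := by
        rw [Real.exp_neg]
        field_simp
    _ ≤ _ := by gcongr

lemma rpow_mul_bernsteinDeriv_inv_le (hμ : IsDecreasingLevyDensity μ) (ht : 0 < t) (hx : 0 < x)
    (hgrowth : (Real.exp 1 + 1) * bernsteinDeriv μ t⁻¹ ≤ bernsteinDeriv μ (t⁻¹ * x)) :
    x ^ 2 * (t ^ (-2 : ℝ) * bernsteinDeriv μ t⁻¹) ≤ μ t := by
  have h := hμ.bernsteinDeriv_le (inv_pos.2 ht) (mul_pos (inv_pos.2 ht) hx) ht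
  rw [inv_mul_cancel₀ ht.ne'] at h
  have habsorbed : bernsteinDeriv μ t⁻¹ ≤ μ t * ((t⁻¹ * x) ^ 2)⁻¹ := by linarith
  rw [Real.rpow_neg ht.le, Real.rpow_two]
  calc x ^ 2 * ((t ^ 2)⁻¹ * bernsteinDeriv μ t⁻¹)
      ≤ x ^ 2 * ((t ^ 2)⁻¹ * (μ t * ((t⁻¹ * x) ^ 2)⁻¹)) := by gcongr
    _ = μ t := by field_simp

end IsDecreasingLevyDensity

lemma eventually_pow_mul_le_comp_mul_pow {f : ℝ → ℝ} {x C : ℝ} (hx : 0 < x) (hC : 0 ≤ C)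
    (h : ∀ᶠ l in atTop, C * f l ≤ f (l * x)) (n : ℕ) :
    ∀ᶠ l in atTop, C ^ n * f l ≤ f (l * x ^ n) := by
  induction n with
  | zero => simp
  | succ n ih =>
    filter_upwards [h, (tendsto_id.atTop_mul_const hx).eventually ih] with l hl hn
    calc C ^ (n + 1) * f l = C ^ n * (C * f l) := by ring
      _ ≤ C ^ n * f (l * x) := by gcongr
      _ ≤ f (l * x * x ^ n) := hn
      _ = f (l * x ^ (n + 1)) := by ring_nf

lemma eventually_mul_le_of_tendsto_div {ι : Type*} {F : Filter ι} {f g : ι → ℝ} {C L : ℝ}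
    (hf : ∀ᶠ i in F, 0 ≤ f i) (hC : 0 ≤ C) (hCL : C < L)
    (h : Tendsto (fun i => g i / f i) F (𝓝 L)) : ∀ᶠ i in F, C * f i ≤ g i := by
  filter_upwards [hf, h.eventually_const_lt hCL] with i hfi hi
  have hne : f i ≠ 0 := fun h0 => by
    rw [h0, div_zero] at hi
    exact hi.not_ge hC
  exact ((lt_div_iff₀ (hfi.lt_of_ne' hne)).1 hi).le

lemma exists_one_lt_eventually_mul_le_comp_mul {f : ℝ → ℝ} {ρ x : ℝ}
    (hf : ∀ᶠ l in atTop, 0 ≤ f l) (hρ : ρ < 0) (hx0 : 0 < x) (hx1 : x < 1)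
    (h : Tendsto (fun l => f (l * x) / f l) atTop (𝓝 (x ^ ρ))) :
    ∃ C, 1 < C ∧ ∀ᶠ l in atTop, C * f l ≤ f (l * x) := by
  obtain ⟨C, hC, hCx⟩ := exists_between (Real.one_lt_rpow_of_pos_of_lt_one_of_neg hx0 hx1 hρ)
  exact ⟨C, hC, eventually_mul_le_of_tendsto_div hf (zero_le_one.trans hC.le) hCx h⟩

theorem levy_density_asymp_general {μ φ' : ℝ → ℝ} {x C : ℝ} (hμ : IsDecreasingLevyDensity μ)
    (hφ' : ∀ l, 0 < l → φ' l = bernsteinDeriv μ l) (hx : 0 < x) (hC : 1 < C)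
    (hgrowth : ∀ᶠ l in atTop, C * φ' l ≤ φ' (l * x)) :
    ∃ c C t₀ : ℝ, 0 < c ∧ c ≤ C ∧ 0 < t₀ ∧ ∀ t, 0 < t → t < t₀ →
      c * (t ^ (-2 : ℝ) * φ' t⁻¹) ≤ μ t ∧ μ t ≤ C * (t ^ (-2 : ℝ) * φ' t⁻¹) := by
  obtain ⟨n, hn⟩ := pow_unbounded_of_one_lt (Real.exp 1 + 1) hC
  have hgrowth_inv : ∀ᶠ t in 𝓝[>] 0, C ^ n * φ' t⁻¹ ≤ φ' (t⁻¹ * x ^ n) :=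
    tendsto_inv_nhdsGT_zero.eventually
      (eventually_pow_mul_le_comp_mul_pow hx (zero_le_one.trans hC.le) hgrowth n)
  obtain ⟨t₀, ht₀, hlarge⟩ := mem_nhdsGT_iff_exists_Ioo_subset.1 hgrowth_inv
  refine ⟨(x ^ n) ^ 2, max ((x ^ n) ^ 2) (2 * Real.exp 1), t₀, by positivity, le_max_left _ _, ht₀,
    fun t ht htt₀ => ?_⟩
  have hxn : 0 < x ^ n := pow_pos hx n
  have hD : 0 ≤ bernsteinDeriv μ t⁻¹ := hμ.bernsteinDeriv_nonneg
  have hCn : C ^ n * φ' t⁻¹ ≤ φ' (t⁻¹ * x ^ n) := hlarge ⟨ht, htt₀⟩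
  rw [hφ' _ (inv_pos.2 ht), hφ' _ (mul_pos (inv_pos.2 ht) hxn)] at hCn
  rw [hφ' _ (inv_pos.2 ht)]
  constructor
  · exact hμ.rpow_mul_bernsteinDeriv_inv_le ht hxn
      ((mul_le_mul_of_nonneg_right hn.le hD).trans hCn)
  · exact (hμ.le_rpow_mul_bernsteinDeriv_inv ht).trans (by gcongr; exact le_max_right _ _)

/-- Under (A-1) with `α ∈ [0,2)`, the Lévy density satisfies
`μ(t) ≍ t⁻² φ'(t⁻¹)` as `t → 0+`. -/
theorem levy_density_asymp
    (α : ℝ) (hα0 : 0 ≤ α) (hα2 : α < 2)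
    (μ φ φ' : ℝ → ℝ)
    (hμpos : ∀ t, 0 < t → 0 < μ t)
    (hμdec : ∀ s t, 0 < s → s ≤ t → μ t ≤ μ s)
    (hμint : IntegrableOn (fun t => min 1 t * μ t) (Ioi 0))
    (hφ : ∀ l, 0 < l → φ l = ∫ t in Ioi (0:ℝ), (1 - Real.exp (-(l * t))) * μ t)
    (hφ' : ∀ l, 0 < l → φ' l = ∫ t in Ioi (0:ℝ), t * Real.exp (-(l * t)) * μ t)
    (hA1 : ∀ x, 0 < x →
      Tendsto (fun l => φ' (l * x) / φ' l) atTop (𝓝 (x ^ (α / 2 - 1)))) :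
    ∃ c C t₀ : ℝ, 0 < c ∧ c ≤ C ∧ 0 < t₀ ∧ ∀ t, 0 < t → t < t₀ →
      c * (t ^ (-2 : ℝ) * φ' t⁻¹) ≤ μ t ∧ μ t ≤ C * (t ^ (-2 : ℝ) * φ' t⁻¹) := by
  have hμ : IsDecreasingLevyDensity μ := ⟨fun s hs t _ => hμdec s t hs, hμint⟩
  have hφ'_nonneg : ∀ l, 0 < l → 0 ≤ φ' l := fun l hl =>
    hμ.bernsteinDeriv_nonneg.trans_eq (hφ' l hl).symm
  obtain ⟨C, hC, hgrowth⟩ := exists_one_lt_eventually_mul_le_comp_mul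
    ((eventually_gt_atTop 0).mono hφ'_nonneg) (by linarith) one_half_pos one_half_lt_one
    (hA1 (1 / 2) one_half_pos)
  exact levy_density_asymp_general hμ hφ' one_half_pos hC hgrowth
end

section
/- Assume condition (A-1) holds with index α = 2 (so φ' is slowly varying at infinity), and conditions (A-3) and (A-4) hold. Then μ(t) · t² / (t φ(t^{−1}) − φ'(t^{−1})) → 1 as t → 0+; equivalently, μ(t) ∼ t^{−2} (t φ(t^{−1}) − φ'(t^{−1})) as t → 0+. -/
open MeasureTheory Set Filter Topology

/-!
Condition (A-4) makes `ψ = λ / φ` the primitive of a function of index `-1`, hence slowly varying,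
whether or not it stays bounded. So `φ` and the tangent intercept `g = φ - λ φ' = ψ' φ²` are
regularly varying of index `1`. Now `g' = λ L`, where `L` is the Laplace transform of `t² μ(t)`;
as `L` is monotone, the monotone density theorem gives `λ² L(λ) ∼ g(λ)`. Karamata's Tauberian
theorem turns this into the behaviour at the origin of `∫₀ˣ t² μ(t) dt`, and the monotone density
theorem, applied once more, recovers `μ`.
-/

/-! ### Regular variation -/

/-- Regular variation of `f` with index `ρ` along `F`, where `F` is `atTop` (behaviour at infinity)
or `𝓝[>] 0` (behaviour at the origin). Index `0` is slow variation. Positivity and measurability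
of `f`, often part of the definition, are left to the lemmas that need them. -/
def IsRegularlyVarying (F : Filter ℝ) (f : ℝ → ℝ) (ρ : ℝ) : Prop :=
  ∀ ⦃x : ℝ⦄, 0 < x → Tendsto (fun l ↦ f (l * x) / f l) F (𝓝 (x ^ ρ))

namespace IsRegularlyVarying

variable {F : Filter ℝ} {f g : ℝ → ℝ} {ρ σ : ℝ}

theorem eventually_ne_zero (hf : IsRegularlyVarying F f ρ) : ∀ᶠ l in F, f l ≠ 0 := by
  have hlim := hf one_pos
  rw [Real.one_rpow] at hlim
  filter_upwards [hlim.eventually_ne one_ne_zero] with l hl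
  exact (div_ne_zero_iff.1 hl).2

theorem mul (hf : IsRegularlyVarying F f ρ) (hg : IsRegularlyVarying F g σ) :
    IsRegularlyVarying F (fun l ↦ f l * g l) (ρ + σ) := by
  intro x hx
  rw [Real.rpow_add hx]
  exact ((hf hx).mul (hg hx)).congr fun l ↦ div_mul_div_comm ..

theorem inv (hf : IsRegularlyVarying F f ρ) : IsRegularlyVarying F (fun l ↦ (f l)⁻¹) (-ρ) := by
  intro x hx
  rw [Real.rpow_neg hx.le]
  refine ((hf hx).inv₀ (Real.rpow_pos_of_pos hx ρ).ne').congr fun l ↦ ?_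
  rw [inv_div_inv, inv_div]

theorem congr (hF : ∀ᶠ l in F, 0 < l) (hf : IsRegularlyVarying F f ρ)
    (hfg : ∀ l, 0 < l → f l = g l) : IsRegularlyVarying F g ρ := by
  intro x hx
  refine (hf hx).congr' ?_
  filter_upwards [hF] with l hl
  rw [hfg l hl, hfg (l * x) (mul_pos hl hx)]

theorem of_tendsto_div {c : ℝ} (hg : IsRegularlyVarying atTop g ρ) (hc : c ≠ 0)
    (hfg : Tendsto (fun l ↦ f l / g l) atTop (𝓝 c)) : IsRegularlyVarying atTop f ρ := by
  intro x hx
  have hscale : Tendsto (fun l : ℝ ↦ l * x) atTop atTop := tendsto_id.atTop_mul_const hx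
  have hlim := ((hfg.comp hscale).mul (hg hx)).div hfg hc
  rw [mul_div_cancel_left₀ _ hc] at hlim
  refine hlim.congr' ?_
  filter_upwards [hg.eventually_ne_zero, hscale.eventually hg.eventually_ne_zero] with l hl hlx
  simp only [Function.comp_apply, Pi.div_apply]
  field_simp

theorem comp_inv (hf : IsRegularlyVarying atTop f ρ) :
    IsRegularlyVarying (𝓝[>] 0) (fun t ↦ f t⁻¹) (-ρ) := by
  intro x hx
  rw [Real.rpow_neg hx.le, ← Real.inv_rpow hx.le]
  refine ((hf (inv_pos.2 hx)).comp tendsto_inv_nhdsGT_zero).congr fun t ↦ ?_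
  simp only [Function.comp_apply, mul_inv]

end IsRegularlyVarying

theorem isRegularlyVarying_id : IsRegularlyVarying atTop (fun l ↦ l) 1 := by
  intro x _
  rw [Real.rpow_one]
  refine tendsto_const_nhds.congr' ?_
  filter_upwards [eventually_ne_atTop 0] with l hl
  exact (mul_div_cancel_left₀ x hl).symm

theorem isRegularlyVarying_zero_of_tendsto {f : ℝ → ℝ} {c : ℝ} (hc : c ≠ 0)
    (hf : Tendsto f atTop (𝓝 c)) : IsRegularlyVarying atTop f 0 := by
  intro x hx
  rw [Real.rpow_zero, ← div_self hc]
  exact (hf.comp (tendsto_id.atTop_mul_const hx)).div hf hc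

theorem tendsto_div_atTop_of_tendsto_deriv_div {F G F' G' : ℝ → ℝ} {L : ℝ}
    (hF : ∀ᶠ l in atTop, HasDerivAt F (F' l) l) (hG : ∀ᶠ l in atTop, HasDerivAt G (G' l) l)
    (hG' : ∀ᶠ l in atTop, 0 < G' l) (hGtop : Tendsto G atTop atTop)
    (hlim : Tendsto (fun l ↦ F' l / G' l) atTop (𝓝 L)) :
    Tendsto (fun l ↦ F l / G l) atTop (𝓝 L) := by
  rw [Metric.tendsto_nhds]
  intro ε hε
  obtain ⟨a, ha⟩ := eventually_atTop.1
    (hF.and (hG.and (hG'.and (Metric.tendsto_nhds.1 hlim (ε / 2) (by positivity)))))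
  have increment_le : ∀ l, a < l → G a ≤ G l →
      |(F l - F a) - L * (G l - G a)| ≤ ε / 2 * (G l - G a) := by
    intro l hl hGl
    obtain ⟨c, hc, hslope⟩ := exists_ratio_hasDerivAt_eq_ratio_slope F F' hl
      (fun x hx ↦ (ha x hx.1).1.continuousAt.continuousWithinAt) (fun x hx ↦ (ha x hx.1.le).1) G G'
      (fun x hx ↦ (ha x hx.1).2.1.continuousAt.continuousWithinAt) (fun x hx ↦ (ha x hx.1.le).2.1)
    obtain ⟨-, -, hc_pos, hc_near⟩ := ha c hc.1.le
    have hF_eq : F l - F a = F' c / G' c * (G l - G a) := by field_simp; linarith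
    rw [hF_eq, ← sub_mul, abs_mul, abs_of_nonneg (sub_nonneg.2 hGl)]
    exact mul_le_mul_of_nonneg_right hc_near.le (sub_nonneg.2 hGl)
  set K := |F a - L * G a| + ε / 2 * |G a| with hK
  filter_upwards [eventually_gt_atTop a, hGtop.eventually_ge_atTop (G a),
    hGtop.eventually_gt_atTop 0, hGtop.eventually_gt_atTop (K / (ε / 2))] with l hl hGl hpos hbig
  rw [div_lt_iff₀ (by positivity)] at hbig
  rw [Real.dist_eq, div_sub' hpos.ne', abs_div, abs_of_pos hpos, div_lt_iff₀ hpos]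
  calc |F l - G l * L|
      = |((F l - F a) - L * (G l - G a)) + (F a - L * G a)| := by ring_nf
    _ ≤ ε / 2 * (G l - G a) + |F a - L * G a| := (abs_add_le _ _).trans (by
        gcongr; exact increment_le l hl hGl)
    _ ≤ ε / 2 * G l + K := by nlinarith [neg_abs_le (G a)]
    _ < ε * G l := by linarith

theorem IsRegularlyVarying.of_hasDerivAt_of_tendsto_atTop {f f' : ℝ → ℝ} {ρ : ℝ}
    (hf : ∀ᶠ l in atTop, HasDerivAt f (f' l) l) (hf' : ∀ᶠ l in atTop, 0 < f' l)
    (hf'_rv : IsRegularlyVarying atTop f' ρ) (hf_top : Tendsto f atTop atTop) :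
    IsRegularlyVarying atTop f (ρ + 1) := by
  intro x hx
  have hscale : Tendsto (fun l : ℝ ↦ l * x) atTop atTop := tendsto_id.atTop_mul_const hx
  refine tendsto_div_atTop_of_tendsto_deriv_div (F' := fun l ↦ f' (l * x) * x) ?_ hf hf' hf_top ?_
  · filter_upwards [hscale.eventually hf] with l hl
    exact hl.comp l (hasDerivAt_mul_const x)
  · rw [Real.rpow_add_one hx.ne']
    exact ((hf'_rv hx).mul_const x).congr fun l ↦ by ring

/-- The boundary case of Karamata's theorem: primitives of functions of index `-1` may converge or
diverge, and vary slowly either way. -/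
theorem IsRegularlyVarying.zero_of_hasDerivAt {f f' : ℝ → ℝ} (hf_pos : ∀ l, 0 < l → 0 < f l)
    (hf : ∀ l, 0 < l → HasDerivAt f (f' l) l) (hf'_nonneg : ∀ l, 0 < l → 0 ≤ f' l)
    (hf'_rv : IsRegularlyVarying atTop f' (-1)) : IsRegularlyVarying atTop f 0 := by
  have hmono : MonotoneOn f (Ioi 0) := by
    refine monotoneOn_of_hasDerivWithinAt_nonneg (f' := f') (convex_Ioi 0)
      (fun l hl ↦ (hf l hl).continuousAt.continuousWithinAt) ?_ ?_ <;> rw [interior_Ioi]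
    exacts [fun l hl ↦ (hf l hl).hasDerivWithinAt, hf'_nonneg]
  have hpos_max : ∀ l : ℝ, 0 < max l 1 := fun l ↦ one_pos.trans_le (le_max_right l 1)
  have hmono_max : Monotone fun l ↦ f (max l 1) :=
    fun a b hab ↦ hmono (hpos_max a) (hpos_max b) (max_le_max_right 1 hab)
  have hmax : (fun l ↦ f (max l 1)) =ᶠ[atTop] f := by
    filter_upwards [eventually_ge_atTop 1] with l hl
    rw [max_eq_left hl]
  rcases tendsto_atTop_of_monotone hmono_max with htop | ⟨c, hc⟩
  · have hf'_pos : ∀ᶠ l in atTop, 0 < f' l := by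
      filter_upwards [eventually_gt_atTop 0, hf'_rv.eventually_ne_zero] with l hl hne
      exact (hf'_nonneg l hl).lt_of_ne' hne
    simpa using of_hasDerivAt_of_tendsto_atTop
      ((eventually_gt_atTop 0).mono hf) hf'_pos hf'_rv (htop.congr' hmax)
  · have hc_pos : 0 < c := (hf_pos _ (hpos_max 0)).trans_le (hmono_max.ge_of_tendsto hc 0)
    exact isRegularlyVarying_zero_of_tendsto hc_pos.ne' (hc.congr' hmax)

theorem deriv_self_div_mul_sq {φ : ℝ → ℝ} {φ' ψ' l : ℝ} (hφ0 : φ l ≠ 0) (hφ : HasDerivAt φ φ' l)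
    (hψ : HasDerivAt (fun s ↦ s / φ s) ψ' l) : ψ' * φ l ^ 2 = φ l - l * φ' := by
  rw [hψ.unique ((hasDerivAt_id l).fun_div hφ hφ0)]
  simp only [id]
  field_simp

theorem IsRegularlyVarying.sub_mul_deriv {φ φ' ψ' : ℝ → ℝ} (hφ_pos : ∀ l, 0 < l → 0 < φ l)
    (hφ : ∀ l, 0 < l → HasDerivAt φ (φ' l) l) (hgap : ∀ l, 0 < l → 0 ≤ φ l - l * φ' l)
    (hψ : ∀ l, 0 < l → HasDerivAt (fun s ↦ s / φ s) (ψ' l) l)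
    (hψ'_rv : IsRegularlyVarying atTop ψ' (-1)) :
    IsRegularlyVarying atTop (fun l ↦ φ l - l * φ' l) 1 := by
  have hψ'_eq : ∀ l, 0 < l → ψ' l * φ l ^ 2 = φ l - l * φ' l := fun l hl ↦
    deriv_self_div_mul_sq (hφ_pos l hl).ne' (hφ l hl) (hψ l hl)
  have hψ'_nonneg : ∀ l, 0 < l → 0 ≤ ψ' l := fun l hl ↦
    nonneg_of_mul_nonneg_left ((hgap l hl).trans_eq (hψ'_eq l hl).symm) (pow_pos (hφ_pos l hl) 2)
  have hψ_rv : IsRegularlyVarying atTop (fun s ↦ s / φ s) 0 :=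
    zero_of_hasDerivAt (fun l hl ↦ div_pos hl (hφ_pos l hl)) hψ hψ'_nonneg hψ'_rv
  have hφ_rv : IsRegularlyVarying atTop φ 1 := by
    have hquot := isRegularlyVarying_id.mul hψ_rv.inv
    rw [neg_zero, add_zero] at hquot
    refine hquot.congr (eventually_gt_atTop 0) fun l hl ↦ ?_
    field_simp
  have hprod := hψ'_rv.mul (hφ_rv.mul hφ_rv)
  norm_num only at hprod
  exact hprod.congr (eventually_gt_atTop 0) fun l hl ↦ by rw [← sq, hψ'_eq l hl]

theorem tendsto_of_eventually_lt_of_eventually_gt {ι α : Type*} [LinearOrder α]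
    [TopologicalSpace α] [OrderTopology α] {p q : Filter ι} [p.NeBot] [q.NeBot] {β : Type*}
    {F : Filter β} {R : β → α} {κ : ι → α} {L : α} (hp : Tendsto κ p (𝓝 L))
    (hq : Tendsto κ q (𝓝 L)) (hlow : ∀ᶠ i in p, ∀ a < κ i, ∀ᶠ x in F, a < R x)
    (hup : ∀ᶠ i in q, ∀ a > κ i, ∀ᶠ x in F, R x < a) : Tendsto R F (𝓝 L) := by
  rw [tendsto_order]
  constructor <;> intro a ha
  · obtain ⟨i, hi, hai⟩ := (hlow.and (hp.eventually_const_lt ha)).exists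
    exact hi a hai
  · obtain ⟨i, hi, hai⟩ := (hup.and (hq.eventually_lt_const ha)).exists
    exact hi a hai

theorem tendsto_rpow_sub_one_div_rpow_sub_one (ρ : ℝ) {p : ℝ} (hp : p ≠ 0) :
    Tendsto (fun b : ℝ ↦ (b ^ ρ - 1) / ((b ^ p - 1) / p)) (𝓝[≠] 1) (𝓝 ρ) := by
  have hslope : ∀ q : ℝ, Tendsto (slope (fun b : ℝ ↦ b ^ q) 1) (𝓝[≠] 1) (𝓝 q) := by
    intro q
    simpa using hasDerivAt_iff_tendsto_slope.1
      (Real.hasDerivAt_rpow_const (x := 1) (p := q) (Or.inl one_ne_zero))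
  have hlim := (hslope ρ).div ((hslope p).div_const p) (div_ne_zero hp hp)
  rw [div_self hp, div_one] at hlim
  refine hlim.congr' ?_
  filter_upwards [self_mem_nhdsWithin] with b (hb : b ≠ 1)
  have hb' : b - 1 ≠ 0 := sub_ne_zero.2 hb
  simp only [Pi.div_apply, slope_def_field, Real.one_rpow]
  rw [div_right_comm (b ^ p - 1), div_div_div_cancel_right₀ hb']

/-- The monotone density theorem, for `g` with density `s ^ (p - 1) * f s`. The density enters only
through the two bounds on the increments of `g`, so `f` need not be continuous. -/
theorem IsRegularlyVarying.tendsto_monotone_density {F : Filter ℝ} {f g : ℝ → ℝ} {p ρ : ℝ}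
    (hp : 0 < p) (hF : ∀ᶠ l in F, 0 < l) (hg_pos : ∀ᶠ l in F, 0 < g l)
    (hg : IsRegularlyVarying F g ρ)
    (hlow : ∀ a b, 0 < a → a < b → f b * ((b ^ p - a ^ p) / p) ≤ g b - g a)
    (hup : ∀ a b, 0 < a → a < b → g b - g a ≤ f a * ((b ^ p - a ^ p) / p)) :
    Tendsto (fun l ↦ l ^ p * f l / g l) F (𝓝 ρ) := by
  have hincr : ∀ b, 0 < b → Tendsto (fun l ↦ (g (l * b) / g l - 1) / ((b ^ p - 1) / p)) F
      (𝓝 ((b ^ ρ - 1) / ((b ^ p - 1) / p))) := fun b hb ↦ ((hg hb).sub_const 1).div_const _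
  have hbound : ∀ b l, 0 < b → b ≠ 1 → 0 < l → 0 < g l →
      g (l * b) / g l - 1 ≤ l ^ p * f l / g l * ((b ^ p - 1) / p) := by
    intro b l hb hb1 hl hgl
    have hpow : (l * b) ^ p = l ^ p * b ^ p := Real.mul_rpow hl.le hb.le
    have hle : g (l * b) - g l ≤ f l * (((l * b) ^ p - l ^ p) / p) := by
      rcases hb1.lt_or_gt with h | h
      · have := hlow (l * b) l (mul_pos hl hb) (mul_lt_of_lt_one_right hl h)
        linear_combination this
      · exact hup l (l * b) hl (lt_mul_of_one_lt_right hl h)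
    calc g (l * b) / g l - 1 = (g (l * b) - g l) / g l := by field_simp
      _ ≤ f l * (((l * b) ^ p - l ^ p) / p) / g l := by gcongr
      _ = l ^ p * f l / g l * ((b ^ p - 1) / p) := by rw [hpow]; ring
  have hκ := tendsto_rpow_sub_one_div_rpow_sub_one ρ hp.ne'
  refine tendsto_of_eventually_lt_of_eventually_gt (p := 𝓝[>] 1) (q := 𝓝[<] 1)
    (hκ.mono_left (nhdsGT_le_nhdsNE 1)) (hκ.mono_left (nhdsLT_le_nhdsNE 1)) ?_ ?_
  · filter_upwards [self_mem_nhdsWithin] with b (hb : 1 < b) a ha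
    have hden : 0 < (b ^ p - 1) / p := div_pos (sub_pos.2 (Real.one_lt_rpow hb hp)) hp
    have hb0 : 0 < b := one_pos.trans hb
    filter_upwards [(hincr b hb0).eventually_const_lt ha, hF, hg_pos] with l hal hl hgl
    exact hal.trans_le ((div_le_iff₀ hden).2 (hbound b l hb0 hb.ne' hl hgl))
  · filter_upwards [Ioo_mem_nhdsLT one_pos] with b ⟨hb0, hb1⟩ a ha
    have hden : (b ^ p - 1) / p < 0 :=
      div_neg_of_neg_of_pos (sub_neg.2 (Real.rpow_lt_one hb0.le hb1 hp)) hp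
    filter_upwards [(hincr b hb0).eventually_lt_const ha, hF, hg_pos] with l hal hl hgl
    exact ((le_div_iff_of_neg hden).2 (hbound b l hb0 hb1.ne hl hgl)).trans_lt hal

theorem exists_sub_eq_mul_of_hasDerivAt_rpow_mul {f g : ℝ → ℝ} {p a b : ℝ} (hp : p ≠ 0)
    (hg : ∀ s, 0 < s → HasDerivAt g (s ^ (p - 1) * f s) s) (ha : 0 < a) (hab : a < b) :
    ∃ c ∈ Ioo a b, g b - g a = f c * ((b ^ p - a ^ p) / p) := by
  have hpow : ∀ s : ℝ, 0 < s → HasDerivAt (fun s : ℝ ↦ s ^ p / p) (s ^ (p - 1)) s := by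
    intro s hs
    have hderiv := (Real.hasDerivAt_rpow_const (p := p) (Or.inl hs.ne')).div_const p
    rwa [mul_div_cancel_left₀ _ hp] at hderiv
  obtain ⟨c, hc, hslope⟩ := exists_ratio_hasDerivAt_eq_ratio_slope g _ hab
    (fun s hs ↦ (hg s (ha.trans_le hs.1)).continuousAt.continuousWithinAt)
    (fun s hs ↦ hg s (ha.trans hs.1)) _ _
    (fun s hs ↦ (hpow s (ha.trans_le hs.1)).continuousAt.continuousWithinAt)
    (fun s hs ↦ hpow s (ha.trans hs.1))
  have hc_pos : 0 < c ^ (p - 1) := Real.rpow_pos_of_pos (ha.trans hc.1) _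
  refine ⟨c, hc, mul_right_cancel₀ hc_pos.ne' ?_⟩
  linear_combination -hslope

theorem IsRegularlyVarying.tendsto_rpow_mul_div_of_hasDerivAt {f g : ℝ → ℝ} {p ρ : ℝ} (hp : 0 < p)
    (hg_deriv : ∀ s, 0 < s → HasDerivAt g (s ^ (p - 1) * f s) s) (hf : AntitoneOn f (Ioi 0))
    (hg_pos : ∀ᶠ l in atTop, 0 < g l) (hg : IsRegularlyVarying atTop g ρ) :
    Tendsto (fun l ↦ l ^ p * f l / g l) atTop (𝓝 ρ) := by
  have hpow : ∀ a b, 0 < a → a < b → 0 ≤ (b ^ p - a ^ p) / p := fun a b ha hab ↦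
    div_nonneg (sub_nonneg.2 (Real.rpow_le_rpow ha.le hab.le hp.le)) hp.le
  refine hg.tendsto_monotone_density hp (eventually_gt_atTop 0) hg_pos ?_ ?_ <;>
    intro a b ha hab <;>
    obtain ⟨c, ⟨hac, hcb⟩, heq⟩ := exists_sub_eq_mul_of_hasDerivAt_rpow_mul hp.ne' hg_deriv ha hab
  · rw [heq]
    exact mul_le_mul_of_nonneg_right (hf (ha.trans hac) (ha.trans hab) hcb.le) (hpow a b ha hab)
  · rw [heq]
    exact mul_le_mul_of_nonneg_right (hf ha (ha.trans hac) hac.le) (hpow a b ha hab)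

/-! ### Laplace transforms and Karamata's Tauberian theorem -/

/-- The Laplace transform of the density `w` on the half-line, as a Bochner integral: it is `0`
where the integral diverges. -/
noncomputable def laplaceTransform (w : ℝ → ℝ) (l : ℝ) : ℝ :=
  ∫ t in Ioi (0 : ℝ), Real.exp (-(l * t)) * w t

/-- Absolute convergence of the Laplace transform of `w` on the whole open half-line. -/
def LaplaceIntegrable (w : ℝ → ℝ) : Prop :=
  ∀ ⦃l : ℝ⦄, 0 < l → IntegrableOn (fun t ↦ Real.exp (-(l * t)) * w t) (Ioi 0)

/-- The integral of the test function `G` against the image under `t ↦ exp (-(l * t))` of the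
measure with density `exp (-(l * t)) * w t`. That image lives on `[0, 1]`, and monomials `G` give
values of the Laplace transform, so Weierstrass approximation applies. -/
noncomputable def laplacePairing (G w : ℝ → ℝ) (l : ℝ) : ℝ :=
  ∫ t in Ioi (0 : ℝ), G (Real.exp (-(l * t))) * (Real.exp (-(l * t)) * w t)

theorem exp_neg_mul_mem_Icc {l t : ℝ} (hl : 0 < l) (ht : 0 < t) :
    Real.exp (-(l * t)) ∈ Icc (0 : ℝ) 1 :=
  ⟨(Real.exp_pos _).le, Real.exp_le_one_iff.2 (neg_nonpos.2 (mul_pos hl ht).le)⟩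

theorem laplaceTransform_nonneg {w : ℝ → ℝ} (hw : ∀ t, 0 < t → 0 ≤ w t) (l : ℝ) :
    0 ≤ laplaceTransform w l :=
  setIntegral_nonneg measurableSet_Ioi fun t ht ↦ mul_nonneg (Real.exp_pos _).le (hw t ht)

theorem IsRegularlyVarying.eventually_laplaceTransform_pos {w : ℝ → ℝ} {ρ : ℝ}
    (hw : ∀ t, 0 < t → 0 ≤ w t) (hrv : IsRegularlyVarying atTop (laplaceTransform w) ρ) :
    ∀ᶠ l in atTop, 0 < laplaceTransform w l :=
  hrv.eventually_ne_zero.mono fun l hl ↦ (laplaceTransform_nonneg hw l).lt_of_ne' hl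

namespace LaplaceIntegrable

variable {w : ℝ → ℝ} {l : ℝ}

theorem integrableOn_Ioc (hw : LaplaceIntegrable w) (c : ℝ) : IntegrableOn w (Ioc 0 c) := by
  have hexp := (hw one_pos).mono_set (show Ioc 0 c ⊆ Ioi 0 from Ioc_subset_Ioi_self)
  rw [← integrableOn_Icc_iff_integrableOn_Ioc] at hexp ⊢
  refine (hexp.continuousOn_mul (g := fun t ↦ Real.exp (1 * t)) (by fun_prop)
    isCompact_Icc).congr_fun (fun t _ ↦ ?_) measurableSet_Icc
  simp only [← mul_assoc, ← Real.exp_add, add_neg_cancel, Real.exp_zero, one_mul]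

theorem integrableOn_pairing (hw : LaplaceIntegrable w) {G : ℝ → ℝ} (hG : Continuous G)
    (hl : 0 < l) :
    IntegrableOn (fun t ↦ G (Real.exp (-(l * t))) * (Real.exp (-(l * t)) * w t)) (Ioi 0) := by
  obtain ⟨C, hC⟩ := (isCompact_Icc (a := (0 : ℝ)) (b := 1)).exists_bound_of_continuousOn
    hG.continuousOn
  refine (hw hl).bdd_mul (c := C) (Continuous.aestronglyMeasurable (by fun_prop)) ?_
  filter_upwards [ae_restrict_mem measurableSet_Ioi] with t ht
  exact hC _ (exp_neg_mul_mem_Icc hl ht)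

theorem abs_pairing_sub_pairing_le (hw : LaplaceIntegrable w) (hw0 : ∀ t, 0 < t → 0 ≤ w t)
    {P G : ℝ → ℝ} {ε : ℝ} (hP : Continuous P) (hG : Continuous G)
    (hPG : ∀ y ∈ Icc (0 : ℝ) 1, |P y - G y| < ε) (hl : 0 < l) :
    |laplacePairing P w l - laplacePairing G w l| ≤ ε * laplaceTransform w l := by
  rw [laplacePairing, laplacePairing, laplaceTransform, ← integral_sub
    (hw.integrableOn_pairing hP hl) (hw.integrableOn_pairing hG hl), ← integral_const_mul,
    ← Real.norm_eq_abs]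
  refine norm_integral_le_of_norm_le ((hw hl).const_mul ε) ?_
  filter_upwards [ae_restrict_mem measurableSet_Ioi] with t ht
  have hmass : 0 ≤ Real.exp (-(l * t)) * w t := mul_nonneg (Real.exp_pos _).le (hw0 t ht)
  rw [← sub_mul, norm_mul, Real.norm_of_nonneg hmass]
  exact mul_le_mul_of_nonneg_right (hPG _ (exp_neg_mul_mem_Icc hl ht)).le hmass

theorem pairing_polynomial (hw : LaplaceIntegrable w) (P : Polynomial ℝ) (hl : 0 < l) :
    laplacePairing P.eval w l =
      ∑ i ∈ Finset.range (P.natDegree + 1), P.coeff i * laplaceTransform w (l * (i + 1)) := by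
  have hmonomial : ∀ (i : ℕ) (t : ℝ),
      Real.exp (-(l * t)) ^ i * Real.exp (-(l * t)) = Real.exp (-(l * (i + 1) * t)) := by
    intro i t
    rw [← pow_succ, ← Real.exp_nat_mul]
    push_cast
    ring_nf
  simp only [laplacePairing, laplaceTransform, ← integral_const_mul]
  rw [← integral_finsetSum]
  · refine integral_congr_ae (.of_forall fun t ↦ ?_)
    simp only [← hmonomial, Polynomial.eval_eq_sum_range, Finset.sum_mul]
    exact Finset.sum_congr rfl fun i _ ↦ by ring
  · exact fun i _ ↦ (hw (by positivity)).const_mul _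

theorem tendsto_pairing_polynomial {k : ℝ → ℝ} {ρ : ℝ} (hw : LaplaceIntegrable w)
    (hrv : IsRegularlyVarying atTop (laplaceTransform w) ρ) (hk : LaplaceIntegrable k)
    (hk_eq : ∀ x, 0 < x → laplaceTransform k x = x ^ ρ) (P : Polynomial ℝ) :
    Tendsto (fun l ↦ laplacePairing P.eval w l / laplaceTransform w l) atTop
      (𝓝 (laplacePairing P.eval k 1)) := by
  have hsum := tendsto_finsetSum (Finset.range (P.natDegree + 1)) fun i _ ↦
    (hrv (Nat.cast_add_one_pos i)).const_mul (P.coeff i)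
  rw [hk.pairing_polynomial P one_pos]
  simp only [one_mul, hk_eq _ (Nat.cast_add_one_pos _)]
  refine hsum.congr' ?_
  filter_upwards [eventually_gt_atTop 0] with l hl
  rw [hw.pairing_polynomial P hl, Finset.sum_div]
  simp only [mul_div_assoc]

theorem tendsto_pairing {k : ℝ → ℝ} {ρ : ℝ} (hw : LaplaceIntegrable w)
    (hw0 : ∀ t, 0 < t → 0 ≤ w t) (hrv : IsRegularlyVarying atTop (laplaceTransform w) ρ)
    (hk : LaplaceIntegrable k) (hk0 : ∀ t, 0 < t → 0 ≤ k t)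
    (hk_eq : ∀ x, 0 < x → laplaceTransform k x = x ^ ρ) {G : ℝ → ℝ} (hG : Continuous G) :
    Tendsto (fun l ↦ laplacePairing G w l / laplaceTransform w l) atTop
      (𝓝 (laplacePairing G k 1)) := by
  rw [Metric.tendsto_nhds]
  intro ε hε
  obtain ⟨P, hP⟩ := exists_polynomial_near_of_continuousOn 0 1 G hG.continuousOn (ε / 3)
    (by positivity)
  have hk_near := hk.abs_pairing_sub_pairing_le hk0 P.continuous hG hP one_pos
  rw [hk_eq 1 one_pos, Real.one_rpow, mul_one] at hk_near
  filter_upwards [Metric.tendsto_nhds.1 (hw.tendsto_pairing_polynomial hrv hk hk_eq P) (ε / 3)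
    (by positivity), eventually_gt_atTop 0, hrv.eventually_laplaceTransform_pos hw0]
    with l hP_near hl hpos
  have hw_near : |laplacePairing P.eval w l / laplaceTransform w l -
      laplacePairing G w l / laplaceTransform w l| ≤ ε / 3 := by
    rw [← sub_div, abs_div, abs_of_pos hpos, div_le_iff₀ hpos]
    exact hw.abs_pairing_sub_pairing_le hw0 P.continuous hG hP hl
  rw [Real.dist_eq] at hP_near ⊢
  rw [abs_le] at hk_near hw_near
  rw [abs_lt] at hP_near ⊢
  constructor <;> linarith [hk_near.1, hk_near.2, hw_near.1, hw_near.2, hP_near.1, hP_near.2]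

end LaplaceIntegrable

theorem exists_continuous_cutoff {a b : ℝ} (hab : a < b) :
    ∃ G : ℝ → ℝ, Continuous G ∧ 0 ≤ G ∧ ∀ s,
      (Iic a).indicator 1 s ≤ G (Real.exp (-s)) * Real.exp (-s) ∧
        G (Real.exp (-s)) * Real.exp (-s) ≤ (Iic b).indicator 1 s := by
  have hdisj : Disjoint (Iic (Real.exp (-b))) (Ici (Real.exp (-a))) :=
    Iic_disjoint_Ici.2 (not_le.2 (Real.exp_lt_exp.2 (neg_lt_neg hab)))
  obtain ⟨f, hf_zero, hf_one, hf_mem⟩ :=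
    exists_continuous_zero_one_of_isClosed isClosed_Iic isClosed_Ici hdisj
  have hmax_pos : ∀ y, 0 < max y (Real.exp (-b)) := fun y ↦
    (Real.exp_pos _).trans_le (le_max_right ..)
  refine ⟨fun y ↦ f y * (max y (Real.exp (-b)))⁻¹,
    f.continuous.mul (.inv₀ (by fun_prop) fun y ↦ (hmax_pos y).ne'),
    fun y ↦ mul_nonneg (hf_mem y).1 (inv_pos.2 (hmax_pos y)).le, fun s ↦ ?_⟩
  simp only [mul_assoc, inv_mul_eq_div]
  rcases le_or_gt s b with hsb | hbs
  · rw [indicator_of_mem (mem_Iic.2 hsb), Pi.one_apply,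
      max_eq_left (Real.exp_le_exp.2 (neg_le_neg hsb)), div_self (Real.exp_pos _).ne', mul_one]
    refine ⟨indicator_apply_le' (fun hsa ↦ ?_) fun _ ↦ (hf_mem _).1, (hf_mem _).2⟩
    exact (hf_one (Real.exp_le_exp.2 (neg_le_neg hsa))).ge
  · rw [hf_zero (Real.exp_le_exp.2 (neg_le_neg hbs.le)), indicator_of_notMem (notMem_Iic.2 hbs),
      indicator_of_notMem (notMem_Iic.2 (hab.trans hbs)), Pi.zero_apply, zero_mul]
    exact ⟨le_rfl, le_rfl⟩

theorem indicator_Iic_one_mul_eq {l : ℝ} (hl : 0 < l) (w : ℝ → ℝ) (a t : ℝ) :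
    (Iic a).indicator 1 (l * t) * w t = (Iic (a / l)).indicator w t := by
  simp only [indicator_apply, mem_Iic, le_div_iff₀' hl, Pi.one_apply, ite_mul, one_mul, zero_mul]

namespace LaplaceIntegrable

variable {w G : ℝ → ℝ} {l : ℝ}

theorem setIntegral_Ioc_le_pairing {a : ℝ} (hw : LaplaceIntegrable w)
    (hw0 : ∀ t, 0 < t → 0 ≤ w t) (hG : Continuous G)
    (hGa : ∀ s, (Iic a).indicator 1 s ≤ G (Real.exp (-s)) * Real.exp (-s)) (hl : 0 < l) :
    ∫ t in Ioc 0 (a / l), w t ≤ laplacePairing G w l := by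
  rw [← Ioi_inter_Iic, ← setIntegral_indicator measurableSet_Iic, laplacePairing]
  refine integral_mono_of_nonneg ?_ (hw.integrableOn_pairing hG hl) ?_ <;>
    filter_upwards [ae_restrict_mem measurableSet_Ioi] with t ht
  · exact indicator_apply_nonneg fun _ ↦ hw0 t ht
  · rw [← indicator_Iic_one_mul_eq hl, ← mul_assoc]
    exact mul_le_mul_of_nonneg_right (hGa _) (hw0 t ht)

theorem pairing_le_setIntegral_Ioc {b : ℝ} (hw : LaplaceIntegrable w)
    (hw0 : ∀ t, 0 < t → 0 ≤ w t) (hG0 : 0 ≤ G)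
    (hGb : ∀ s, G (Real.exp (-s)) * Real.exp (-s) ≤ (Iic b).indicator 1 s) (hl : 0 < l) :
    laplacePairing G w l ≤ ∫ t in Ioc 0 (b / l), w t := by
  have hint : IntegrableOn ((Iic (b / l)).indicator w) (Ioi 0) := by
    rw [IntegrableOn, integrable_indicator_iff measurableSet_Iic, IntegrableOn,
      Measure.restrict_restrict measurableSet_Iic, Iic_inter_Ioi]
    exact hw.integrableOn_Ioc _
  rw [← Ioi_inter_Iic, ← setIntegral_indicator measurableSet_Iic, laplacePairing]
  refine integral_mono_of_nonneg ?_ hint ?_ <;>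
    filter_upwards [ae_restrict_mem measurableSet_Ioi] with t ht <;> rw [← mul_assoc]
  · exact mul_nonneg (mul_nonneg (hG0 _) (Real.exp_pos _).le) (hw0 t ht)
  · rw [← indicator_Iic_one_mul_eq hl]
    exact mul_le_mul_of_nonneg_right (hGb _) (hw0 t ht)

end LaplaceIntegrable

theorem setIntegral_Ioc_rpow {p a b : ℝ} (hp : 0 < p) (hab : a ≤ b) :
    ∫ t in Ioc a b, t ^ (p - 1) = (b ^ p - a ^ p) / p := by
  rw [← intervalIntegral.integral_of_le hab, integral_rpow (Or.inl (by linarith)), sub_add_cancel]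

/-- The Riemann–Liouville kernel, normalised so that its Laplace transform is `l ^ (-ρ)`. -/
noncomputable def fractionalKernel (ρ t : ℝ) : ℝ :=
  t ^ (ρ - 1) / Real.Gamma ρ

section FractionalKernel

variable {ρ : ℝ}

theorem fractionalKernel_nonneg (hρ : 0 < ρ) {t : ℝ} (ht : 0 < t) : 0 ≤ fractionalKernel ρ t :=
  div_nonneg (Real.rpow_nonneg ht.le _) (Real.Gamma_pos_of_pos hρ).le

theorem laplaceIntegrable_fractionalKernel (hρ : 0 < ρ) :
    LaplaceIntegrable (fractionalKernel ρ) := by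
  intro l hl
  have hint := integrableOn_rpow_mul_exp_neg_mul_rpow (s := ρ - 1) (by linarith) one_pos hl
  refine IntegrableOn.congr_fun (hint.div_const (Real.Gamma ρ)) (fun t _ ↦ ?_) measurableSet_Ioi
  simp only [fractionalKernel, Real.rpow_one, neg_mul]
  ring

theorem laplaceTransform_fractionalKernel (hρ : 0 < ρ) {l : ℝ} (hl : 0 < l) :
    laplaceTransform (fractionalKernel ρ) l = l ^ (-ρ) := by
  calc laplaceTransform (fractionalKernel ρ) l
      = (∫ t in Ioi (0 : ℝ), t ^ (ρ - 1) * Real.exp (-(l * t))) / Real.Gamma ρ := by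
        rw [← integral_div, laplaceTransform]
        congr with t
        rw [fractionalKernel]
        ring
    _ = l ^ (-ρ) := by
        rw [Real.integral_rpow_mul_exp_neg_mul_Ioi hρ hl,
          mul_div_cancel_right₀ _ (Real.Gamma_pos_of_pos hρ).ne', one_div, Real.inv_rpow hl.le,
          Real.rpow_neg hl.le]

theorem setIntegral_Ioc_fractionalKernel (hρ : 0 < ρ) {c : ℝ} (hc : 0 ≤ c) :
    ∫ t in Ioc 0 c, fractionalKernel ρ t = c ^ ρ / Real.Gamma (ρ + 1) := by
  simp only [fractionalKernel, integral_div]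
  rw [setIntegral_Ioc_rpow hρ hc, Real.zero_rpow hρ.ne', sub_zero, div_div,
    Real.Gamma_add_one hρ.ne']

end FractionalKernel

section RpowWeightedPrimitive

variable {μ : ℝ → ℝ} {p a b : ℝ}

theorem setIntegral_Ioc_rpow_mul_le (hp : 0 < p) (hμ : AntitoneOn μ (Ioi 0))
    (hint : IntegrableOn (fun t ↦ t ^ (p - 1) * μ t) (Ioc a b)) (ha : 0 < a) (hab : a ≤ b) :
    ∫ t in Ioc a b, t ^ (p - 1) * μ t ≤ μ a * ((b ^ p - a ^ p) / p) := by
  rw [← setIntegral_Ioc_rpow hp hab, mul_comm, ← integral_mul_const]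
  refine setIntegral_mono_on hint ?_ measurableSet_Ioc fun t ht ↦ ?_
  · exact ((intervalIntegral.intervalIntegrable_rpow' (by linarith)).1).mul_const _
  · exact mul_le_mul_of_nonneg_left (hμ ha (ha.trans ht.1) ht.1.le)
      (Real.rpow_nonneg (ha.trans ht.1).le _)

theorem le_setIntegral_Ioc_rpow_mul (hp : 0 < p) (hμ : AntitoneOn μ (Ioi 0))
    (hint : IntegrableOn (fun t ↦ t ^ (p - 1) * μ t) (Ioc a b)) (ha : 0 < a) (hab : a ≤ b) :
    μ b * ((b ^ p - a ^ p) / p) ≤ ∫ t in Ioc a b, t ^ (p - 1) * μ t := by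
  rw [← setIntegral_Ioc_rpow hp hab, mul_comm, ← integral_mul_const]
  refine setIntegral_mono_on ?_ hint measurableSet_Ioc fun t ht ↦ ?_
  · exact ((intervalIntegral.intervalIntegrable_rpow' (by linarith)).1).mul_const _
  · exact mul_le_mul_of_nonneg_left (hμ (ha.trans ht.1) (ha.trans_le hab) ht.2)
      (Real.rpow_nonneg (ha.trans ht.1).le _)

end RpowWeightedPrimitive

theorem setIntegral_Ioc_sub_setIntegral_Ioc {w : ℝ → ℝ} {a b : ℝ} (hw : IntegrableOn w (Ioc 0 b))
    (ha : 0 ≤ a) (hab : a ≤ b) :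
    (∫ t in Ioc 0 b, w t) - ∫ t in Ioc 0 a, w t = ∫ t in Ioc a b, w t := by
  rw [← Ioc_union_Ioc_eq_Ioc ha hab, setIntegral_union (Ioc_disjoint_Ioc_of_le le_rfl)
    measurableSet_Ioc (hw.mono_set (Ioc_subset_Ioc_right hab))
    (hw.mono_set (Ioc_subset_Ioc_left ha)), add_sub_cancel_left]

namespace IsRegularlyVarying

variable {w : ℝ → ℝ} {ρ : ℝ}

theorem tendsto_setIntegral_Ioc_div_laplaceTransform (hρ : 0 < ρ) (hw : LaplaceIntegrable w)
    (hw0 : ∀ t, 0 < t → 0 ≤ w t) (hrv : IsRegularlyVarying atTop (laplaceTransform w) (-ρ)) :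
    Tendsto (fun l ↦ (∫ t in Ioc 0 l⁻¹, w t) / laplaceTransform w l) atTop
      (𝓝 (1 / Real.Gamma (ρ + 1))) := by
  have hk := laplaceIntegrable_fractionalKernel hρ
  have hk0 : ∀ t, 0 < t → 0 ≤ fractionalKernel ρ t := fun _ ↦ fractionalKernel_nonneg hρ
  have hpairing : ∀ {G : ℝ → ℝ}, Continuous G →
      Tendsto (fun l ↦ laplacePairing G w l / laplaceTransform w l) atTop
        (𝓝 (laplacePairing G (fractionalKernel ρ) 1)) :=
    hw.tendsto_pairing hw0 hrv hk hk0 fun _ ↦ laplaceTransform_fractionalKernel hρ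
  have hpos := hrv.eventually_laplaceTransform_pos hw0
  have hκ : Tendsto (fun c : ℝ ↦ c ^ ρ / Real.Gamma (ρ + 1)) (𝓝 1)
      (𝓝 (1 / Real.Gamma (ρ + 1))) := by
    simpa using (Real.continuousAt_rpow_const 1 ρ (Or.inl one_ne_zero)).tendsto.div_const
      (Real.Gamma (ρ + 1))
  refine tendsto_of_eventually_lt_of_eventually_gt (p := 𝓝[<] 1) (q := 𝓝[>] 1)
    (hκ.mono_left nhdsWithin_le_nhds) (hκ.mono_left nhdsWithin_le_nhds) ?_ ?_
  · filter_upwards [Ioo_mem_nhdsLT one_pos] with c ⟨hc0, hc1⟩ a ha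
    obtain ⟨G, hG, hG0, hcut⟩ := exists_continuous_cutoff hc1
    have hmass := hk.setIntegral_Ioc_le_pairing hk0 hG (fun s ↦ (hcut s).1) one_pos
    rw [div_one, setIntegral_Ioc_fractionalKernel hρ hc0.le] at hmass
    filter_upwards [(hpairing hG).eventually_const_lt (ha.trans_le hmass),
      eventually_gt_atTop 0, hpos] with l hal hl hLl
    refine hal.trans_le (div_le_div_of_nonneg_right ?_ hLl.le)
    rw [← one_div]
    exact hw.pairing_le_setIntegral_Ioc hw0 hG0 (fun s ↦ (hcut s).2) hl
  · filter_upwards [self_mem_nhdsWithin] with c (hc : 1 < c) a ha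
    obtain ⟨G, hG, hG0, hcut⟩ := exists_continuous_cutoff hc
    have hmass := hk.pairing_le_setIntegral_Ioc hk0 hG0 (fun s ↦ (hcut s).2) one_pos
    rw [div_one, setIntegral_Ioc_fractionalKernel hρ (one_pos.trans hc).le] at hmass
    filter_upwards [(hpairing hG).eventually_lt_const (hmass.trans_lt ha),
      eventually_gt_atTop 0, hpos] with l hal hl hLl
    refine (div_le_div_of_nonneg_right ?_ hLl.le).trans_lt hal
    rw [← one_div]
    exact hw.setIntegral_Ioc_le_pairing hw0 hG (fun s ↦ (hcut s).1) hl

theorem tendsto_rpow_mul_div_setIntegral {μ : ℝ → ℝ} {p : ℝ} (hp : 0 < p)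
    (hμ : AntitoneOn μ (Ioi 0)) (hint : ∀ c, IntegrableOn (fun t ↦ t ^ (p - 1) * μ t) (Ioc 0 c))
    (hpos : ∀ᶠ x in 𝓝[>] 0, 0 < ∫ t in Ioc 0 x, t ^ (p - 1) * μ t)
    (hrv : IsRegularlyVarying (𝓝[>] 0) (fun x ↦ ∫ t in Ioc 0 x, t ^ (p - 1) * μ t) ρ) :
    Tendsto (fun x ↦ x ^ p * μ x / ∫ t in Ioc 0 x, t ^ (p - 1) * μ t) (𝓝[>] 0) (𝓝 ρ) := by
  have hint_pos : ∀ a b, 0 < a → IntegrableOn (fun t ↦ t ^ (p - 1) * μ t) (Ioc a b) :=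
    fun a b ha ↦ (hint b).mono_set (Ioc_subset_Ioc_left ha.le)
  refine hrv.tendsto_monotone_density hp self_mem_nhdsWithin hpos ?_ ?_ <;>
    intro a b ha hab <;> rw [setIntegral_Ioc_sub_setIntegral_Ioc (hint b) ha.le hab.le]
  · exact le_setIntegral_Ioc_rpow_mul hp hμ (hint_pos a b ha) ha hab.le
  · exact setIntegral_Ioc_rpow_mul_le hp hμ (hint_pos a b ha) ha hab.le

theorem tendsto_rpow_mul_div_laplaceTransform_inv {μ : ℝ → ℝ} {p : ℝ} (hp : 0 < p) (hρ : 0 < ρ)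
    (hμ0 : ∀ t, 0 < t → 0 ≤ μ t) (hμ : AntitoneOn μ (Ioi 0))
    (hint : LaplaceIntegrable fun t ↦ t ^ (p - 1) * μ t)
    (hrv : IsRegularlyVarying atTop (laplaceTransform fun t ↦ t ^ (p - 1) * μ t) (-ρ)) :
    Tendsto (fun t ↦ t ^ p * μ t / laplaceTransform (fun t ↦ t ^ (p - 1) * μ t) t⁻¹) (𝓝[>] 0)
      (𝓝 (1 / Real.Gamma ρ)) := by
  set w : ℝ → ℝ := fun t ↦ t ^ (p - 1) * μ t
  set U : ℝ → ℝ := fun x ↦ ∫ t in Ioc 0 x, w t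
  have hw0 : ∀ t, 0 < t → 0 ≤ w t := fun t ht ↦ mul_nonneg (Real.rpow_nonneg ht.le _) (hμ0 t ht)
  have hΓ : 0 < 1 / Real.Gamma (ρ + 1) := one_div_pos.2 (Real.Gamma_pos_of_pos (by positivity))
  have htauber : Tendsto (fun l ↦ U l⁻¹ / laplaceTransform w l) atTop
      (𝓝 (1 / Real.Gamma (ρ + 1))) :=
    tendsto_setIntegral_Ioc_div_laplaceTransform hρ hint hw0 hrv
  have htauber_zero : Tendsto (fun t ↦ U t / laplaceTransform w t⁻¹) (𝓝[>] 0)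
      (𝓝 (1 / Real.Gamma (ρ + 1))) := by
    simpa [Function.comp_def] using htauber.comp tendsto_inv_nhdsGT_zero
  have hU_pos : ∀ᶠ t in 𝓝[>] 0, 0 < U t := by
    filter_upwards [htauber_zero.eventually_const_lt hΓ, tendsto_inv_nhdsGT_zero.eventually
      (hrv.eventually_laplaceTransform_pos hw0)] with t hquot hpos
    exact (div_pos_iff_of_pos_right hpos).1 hquot
  have hU_rv : IsRegularlyVarying (𝓝[>] 0) U ρ := by
    simpa only [inv_inv, neg_neg] using (of_tendsto_div hrv hΓ.ne' htauber).comp_inv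
  have hdensity := hU_rv.tendsto_rpow_mul_div_setIntegral hp hμ hint.integrableOn_Ioc hU_pos
  have hprod := hdensity.mul htauber_zero
  rw [Real.Gamma_add_one hρ.ne', one_div, mul_inv, mul_inv_cancel_left₀ hρ.ne', ← one_div] at hprod
  refine hprod.congr' ?_
  filter_upwards [hU_pos] with t ht
  exact div_mul_div_cancel₀ ht.ne'

end IsRegularlyVarying

section DerivativeOfLaplaceTransform

variable {w : ℝ → ℝ} {c : ℝ}

theorem mul_exp_neg_le {l : ℝ} (hl : 0 < l) (t : ℝ) :
    t * Real.exp (-(l * t)) ≤ 2 / l * (Real.exp (-(l / 2 * t)) - Real.exp (-(l * t))) := by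
  have hsplit : Real.exp (-(l / 2 * t)) = Real.exp (l / 2 * t) * Real.exp (-(l * t)) := by
    rw [← Real.exp_add]
    ring_nf
  rw [hsplit, ← sub_one_mul, ← mul_assoc]
  refine mul_le_mul_of_nonneg_right ?_ (Real.exp_pos _).le
  rw [div_mul_eq_mul_div, le_div_iff₀ hl]
  linarith [Real.add_one_le_exp (l / 2 * t)]

theorem laplaceIntegrable_id_mul_of_sub_exp_mul
    (hw : AEStronglyMeasurable w (volume.restrict (Ioi 0)))
    (hint : ∀ l, 0 < l → IntegrableOn (fun t ↦ (c - Real.exp (-(l * t))) * w t) (Ioi 0)) :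
    LaplaceIntegrable fun t ↦ t * w t := by
  intro l hl
  have hdiff := (((hint l hl).sub (hint (l / 2) (by positivity))).const_mul (2 / l)).norm
  refine hdiff.mono' ((Continuous.aestronglyMeasurable (by fun_prop)).mul
    (continuous_id.aestronglyMeasurable.mul hw)) ?_
  filter_upwards [ae_restrict_mem measurableSet_Ioi] with t (ht : 0 < t)
  calc ‖Real.exp (-(l * t)) * (t * w t)‖ = t * Real.exp (-(l * t)) * ‖w t‖ := by
        rw [norm_mul, norm_mul, Real.norm_of_nonneg (Real.exp_pos _).le, Real.norm_of_nonneg ht.le]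
        ring
    _ ≤ ‖2 / l * (Real.exp (-(l / 2 * t)) - Real.exp (-(l * t)))‖ * ‖w t‖ := by
        gcongr
        exact (mul_exp_neg_le hl t).trans (Real.le_norm_self _)
    _ = ‖2 / l * ((c - Real.exp (-(l * t))) * w t - (c - Real.exp (-(l / 2 * t))) * w t)‖ := by
        rw [← norm_mul]
        ring_nf

/-- The constant `c` lets one statement cover Laplace exponents (`c = 1`) and, up to sign, Laplace
transforms (`c = 0`). -/
theorem hasDerivAt_integral_sub_exp_mul (hw : AEStronglyMeasurable w (volume.restrict (Ioi 0)))
    (hint : ∀ l, 0 < l → IntegrableOn (fun t ↦ (c - Real.exp (-(l * t))) * w t) (Ioi 0))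
    {l : ℝ} (hl : 0 < l) :
    HasDerivAt (fun x ↦ ∫ t in Ioi (0 : ℝ), (c - Real.exp (-(x * t))) * w t)
      (laplaceTransform (fun t ↦ t * w t) l) l := by
  have hid := laplaceIntegrable_id_mul_of_sub_exp_mul hw hint
  refine (hasDerivAt_integral_of_dominated_loc_of_deriv_le
    (bound := fun t ↦ ‖Real.exp (-(l / 2 * t)) * (t * w t)‖)
    (F := fun x t ↦ (c - Real.exp (-(x * t))) * w t)
    (Ioi_mem_nhds (half_lt_self hl)) ?_ (hint l hl)
    (F' := fun x t ↦ Real.exp (-(x * t)) * (t * w t)) (hid hl).aestronglyMeasurable ?_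
    (hid (half_pos hl)).norm ?_).2
  · filter_upwards [eventually_gt_nhds hl] with x hx using (hint x hx).aestronglyMeasurable
  · filter_upwards [ae_restrict_mem measurableSet_Ioi] with t (ht : 0 < t) x (hx : l / 2 < x)
    simp only [norm_mul, Real.norm_of_nonneg (Real.exp_pos _).le]
    gcongr
  · refine .of_forall fun t x _ ↦ ?_
    have hexp : HasDerivAt (fun x ↦ Real.exp (-(x * t))) (Real.exp (-(x * t)) * -t) x :=
      (hasDerivAt_mul_const t).neg.exp
    simpa [mul_assoc] using (hexp.const_sub c).mul_const (w t)

theorem LaplaceIntegrable.zero_sub_exp_mul (hint : LaplaceIntegrable w) {l : ℝ} (hl : 0 < l) :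
    IntegrableOn (fun t ↦ (0 - Real.exp (-(l * t))) * w t) (Ioi 0) := by
  simpa only [zero_sub, neg_mul] using (hint hl).fun_neg

theorem LaplaceIntegrable.id_mul (hint : LaplaceIntegrable w)
    (hw : AEStronglyMeasurable w (volume.restrict (Ioi 0))) :
    LaplaceIntegrable fun t ↦ t * w t :=
  laplaceIntegrable_id_mul_of_sub_exp_mul hw fun _ ↦ hint.zero_sub_exp_mul

theorem LaplaceIntegrable.hasDerivAt_laplaceTransform (hint : LaplaceIntegrable w)
    (hw : AEStronglyMeasurable w (volume.restrict (Ioi 0))) {l : ℝ} (hl : 0 < l) :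
    HasDerivAt (laplaceTransform w) (-laplaceTransform (fun t ↦ t * w t) l) l := by
  have hderiv := (hasDerivAt_integral_sub_exp_mul hw (fun _ ↦ hint.zero_sub_exp_mul) hl).fun_neg
  simp only [zero_sub, neg_mul, integral_neg, neg_neg] at hderiv
  exact hderiv

end DerivativeOfLaplaceTransform

theorem antitoneOn_laplaceTransform {w : ℝ → ℝ} (hint : LaplaceIntegrable w)
    (hw0 : ∀ t, 0 < t → 0 ≤ w t) : AntitoneOn (laplaceTransform w) (Ioi 0) := by
  intro a ha b hb hab
  refine setIntegral_mono_on (hint hb) (hint ha) measurableSet_Ioi fun t (ht : 0 < t) ↦ ?_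
  have := hw0 t ht
  gcongr

/-! ### Laplace exponents and Lévy densities -/

/-- The Laplace exponent of a driftless subordinator with Lévy density `μ` and no killing: the
Bernstein function `φ` of the theorem. -/
noncomputable def laplaceExponent (μ : ℝ → ℝ) (l : ℝ) : ℝ :=
  ∫ t in Ioi (0 : ℝ), (1 - Real.exp (-(l * t))) * μ t

/-- The value at `0` of the tangent to the Laplace exponent `φ` at `l`, that is
`φ l - l * φ' l`. -/
noncomputable def tangentIntercept (μ : ℝ → ℝ) (l : ℝ) : ℝ :=
  laplaceExponent μ l - l * laplaceTransform (fun t ↦ t * μ t) l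

section LevyDensity

variable {μ : ℝ → ℝ}

theorem aestronglyMeasurable_of_antitoneOn (hμ : AntitoneOn μ (Ioi 0)) :
    AEStronglyMeasurable μ (volume.restrict (Ioi 0)) :=
  (aemeasurable_restrict_of_antitoneOn measurableSet_Ioi hμ).aestronglyMeasurable

theorem one_sub_exp_neg_mul_mem_Icc {l t : ℝ} (hl : 0 < l) (ht : 0 < t) :
    1 - Real.exp (-(l * t)) ∈ Icc 0 ((1 + l) * min 1 t) := by
  refine ⟨sub_nonneg.2 (exp_neg_mul_mem_Icc hl ht).2, ?_⟩
  have hlinear := Real.add_one_le_exp (-(l * t))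
  rcases min_cases 1 t with ⟨hmin, -⟩ | ⟨hmin, -⟩ <;> rw [hmin] <;>
    nlinarith [Real.exp_pos (-(l * t))]

theorem integrableOn_one_sub_exp_mul (hμ : AEStronglyMeasurable μ (volume.restrict (Ioi 0)))
    (hint : IntegrableOn (fun t ↦ min 1 t * μ t) (Ioi 0)) {l : ℝ} (hl : 0 < l) :
    IntegrableOn (fun t ↦ (1 - Real.exp (-(l * t))) * μ t) (Ioi 0) := by
  refine (hint.norm.const_mul (1 + l)).mono'
    ((Continuous.aestronglyMeasurable (by fun_prop)).mul hμ) ?_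
  filter_upwards [ae_restrict_mem measurableSet_Ioi] with t (ht : 0 < t)
  obtain ⟨hnonneg, hle⟩ := one_sub_exp_neg_mul_mem_Icc hl ht
  rw [norm_mul, norm_mul, Real.norm_of_nonneg hnonneg,
    Real.norm_of_nonneg (le_min zero_le_one ht.le), ← mul_assoc]
  gcongr

theorem laplaceExponent_nonneg (hμ0 : ∀ t, 0 < t → 0 ≤ μ t) {l : ℝ} (hl : 0 < l) :
    0 ≤ laplaceExponent μ l :=
  setIntegral_nonneg measurableSet_Ioi fun t ht ↦
    mul_nonneg (one_sub_exp_neg_mul_mem_Icc hl ht).1 (hμ0 t ht)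

theorem laplaceExponent_eq_zero_of_eq_zero (hμ0 : ∀ t, 0 < t → 0 ≤ μ t)
    (hμ : AEStronglyMeasurable μ (volume.restrict (Ioi 0)))
    (hint : IntegrableOn (fun t ↦ min 1 t * μ t) (Ioi 0)) {l : ℝ} (hl : 0 < l)
    (hzero : laplaceExponent μ l = 0) (x : ℝ) : laplaceExponent μ x = 0 := by
  have hnonneg : 0 ≤ᵐ[volume.restrict (Ioi 0)] fun t ↦ (1 - Real.exp (-(l * t))) * μ t := by
    filter_upwards [ae_restrict_mem measurableSet_Ioi] with t ht
    exact mul_nonneg (one_sub_exp_neg_mul_mem_Icc hl ht).1 (hμ0 t ht)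
  have hae := (setIntegral_eq_zero_iff_of_nonneg_ae hnonneg
    (integrableOn_one_sub_exp_mul hμ hint hl)).1 hzero
  refine integral_eq_zero_of_ae ?_
  filter_upwards [hae, ae_restrict_mem measurableSet_Ioi] with t hμt (ht : 0 < t)
  have hexp : 1 - Real.exp (-(l * t)) ≠ 0 :=
    (sub_pos.2 (Real.exp_lt_one_iff.2 (neg_neg_of_pos (mul_pos hl ht)))).ne'
  rw [(mul_eq_zero.1 hμt).resolve_left hexp, mul_zero, Pi.zero_apply]

theorem hasDerivAt_laplaceExponent (hμ : AEStronglyMeasurable μ (volume.restrict (Ioi 0)))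
    (hint : IntegrableOn (fun t ↦ min 1 t * μ t) (Ioi 0)) {l : ℝ} (hl : 0 < l) :
    HasDerivAt (laplaceExponent μ) (laplaceTransform (fun t ↦ t * μ t) l) l :=
  hasDerivAt_integral_sub_exp_mul hμ (fun _ ↦ integrableOn_one_sub_exp_mul hμ hint) hl

theorem laplaceIntegrable_id_mul_of_integrableOn_min
    (hμ : AEStronglyMeasurable μ (volume.restrict (Ioi 0)))
    (hint : IntegrableOn (fun t ↦ min 1 t * μ t) (Ioi 0)) :
    LaplaceIntegrable fun t ↦ t * μ t :=
  laplaceIntegrable_id_mul_of_sub_exp_mul hμ fun _ ↦ integrableOn_one_sub_exp_mul hμ hint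

theorem tangentIntercept_nonneg (hμ0 : ∀ t, 0 < t → 0 ≤ μ t)
    (hμ : AEStronglyMeasurable μ (volume.restrict (Ioi 0)))
    (hint : IntegrableOn (fun t ↦ min 1 t * μ t) (Ioi 0)) {l : ℝ} (hl : 0 < l) :
    0 ≤ tangentIntercept μ l := by
  rw [tangentIntercept, sub_nonneg, laplaceExponent, laplaceTransform, ← integral_const_mul]
  refine setIntegral_mono_on ((laplaceIntegrable_id_mul_of_integrableOn_min hμ hint hl).const_mul l)
    (integrableOn_one_sub_exp_mul hμ hint hl) measurableSet_Ioi fun t (ht : 0 < t) ↦ ?_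
  have hexp : (1 + l * t) * Real.exp (-(l * t)) ≤ 1 := by
    rw [Real.exp_neg, ← div_eq_mul_inv, div_le_one (Real.exp_pos _), add_comm]
    exact Real.add_one_le_exp _
  calc l * (Real.exp (-(l * t)) * (t * μ t)) = l * t * Real.exp (-(l * t)) * μ t := by ring
    _ ≤ (1 - Real.exp (-(l * t))) * μ t := by
      refine mul_le_mul_of_nonneg_right ?_ (hμ0 t ht)
      linarith

theorem hasDerivAt_tangentIntercept (hμ : AEStronglyMeasurable μ (volume.restrict (Ioi 0)))
    (hint : IntegrableOn (fun t ↦ min 1 t * μ t) (Ioi 0)) {l : ℝ} (hl : 0 < l) :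
    HasDerivAt (tangentIntercept μ) (l * laplaceTransform (fun t ↦ t * (t * μ t)) l) l := by
  have hφ' := (laplaceIntegrable_id_mul_of_integrableOn_min hμ hint).hasDerivAt_laplaceTransform
    (continuous_id.aestronglyMeasurable.mul hμ) hl
  refine ((hasDerivAt_laplaceExponent hμ hint hl).sub
    ((hasDerivAt_id l).mul hφ')).congr_deriv ?_
  simp only [id]
  ring

theorem laplaceIntegrable_id_mul_id_mul (hμ : AEStronglyMeasurable μ (volume.restrict (Ioi 0)))
    (hint : IntegrableOn (fun t ↦ min 1 t * μ t) (Ioi 0)) :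
    LaplaceIntegrable fun t ↦ t * (t * μ t) :=
  (laplaceIntegrable_id_mul_of_integrableOn_min hμ hint).id_mul
    (continuous_id.aestronglyMeasurable.mul hμ)

theorem IsRegularlyVarying.tendsto_sq_mul_laplaceTransform_div_tangentIntercept {ρ : ℝ}
    (hμ0 : ∀ t, 0 < t → 0 ≤ μ t) (hμ : AEStronglyMeasurable μ (volume.restrict (Ioi 0)))
    (hint : IntegrableOn (fun t ↦ min 1 t * μ t) (Ioi 0))
    (hrv : IsRegularlyVarying atTop (tangentIntercept μ) ρ) :
    Tendsto (fun l ↦ l ^ 2 * laplaceTransform (fun t ↦ t * (t * μ t)) l / tangentIntercept μ l)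
      atTop (𝓝 ρ) := by
  have hpos : ∀ᶠ l in atTop, 0 < tangentIntercept μ l := by
    filter_upwards [eventually_gt_atTop 0, hrv.eventually_ne_zero] with l hl hne
    exact (tangentIntercept_nonneg hμ0 hμ hint hl).lt_of_ne' hne
  have hanti := antitoneOn_laplaceTransform (laplaceIntegrable_id_mul_id_mul hμ hint)
    fun t ht ↦ mul_nonneg ht.le (mul_nonneg ht.le (hμ0 t ht))
  simp only [← Real.rpow_two]
  refine hrv.tendsto_rpow_mul_div_of_hasDerivAt two_pos (fun l hl ↦ ?_) hanti hpos
  convert hasDerivAt_tangentIntercept hμ hint hl using 2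
  norm_num

theorem IsRegularlyVarying.tendsto_levyDensity_mul_div_tangentIntercept
    (hμ0 : ∀ t, 0 < t → 0 ≤ μ t) (hμ : AntitoneOn μ (Ioi 0))
    (hint : IntegrableOn (fun t ↦ min 1 t * μ t) (Ioi 0))
    (hrv : IsRegularlyVarying atTop (tangentIntercept μ) 1) :
    Tendsto (fun t ↦ μ t * t / tangentIntercept μ t⁻¹) (𝓝[>] 0) (𝓝 1) := by
  have hμ_meas := aestronglyMeasurable_of_antitoneOn hμ
  have hfg := hrv.tendsto_sq_mul_laplaceTransform_div_tangentIntercept hμ0 hμ_meas hint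
  have hf_int := laplaceIntegrable_id_mul_id_mul hμ_meas hint
  have hw : (fun t ↦ t * (t * μ t)) = fun t ↦ t ^ ((3 : ℝ) - 1) * μ t := by
    funext t
    norm_num
    ring
  rw [hw] at hfg hf_int
  set f := laplaceTransform fun t ↦ t ^ ((3 : ℝ) - 1) * μ t
  have hf_rv : IsRegularlyVarying atTop f (-1) := by
    have hquot := hrv.mul (isRegularlyVarying_id.mul isRegularlyVarying_id).inv
    norm_num only at hquot
    refine of_tendsto_div hquot one_ne_zero (hfg.congr fun l ↦ ?_)
    field_simp
  have hμf : Tendsto (fun t ↦ t ^ (3 : ℝ) * μ t / f t⁻¹) (𝓝[>] 0) (𝓝 1) := by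
    simpa only [Real.Gamma_one, div_one] using
      tendsto_rpow_mul_div_laplaceTransform_inv three_pos one_pos hμ0 hμ hf_int hf_rv
  have hprod := hμf.mul (hfg.comp tendsto_inv_nhdsGT_zero)
  rw [mul_one] at hprod
  refine hprod.congr' ?_
  filter_upwards [self_mem_nhdsWithin, tendsto_inv_nhdsGT_zero.eventually hf_rv.eventually_ne_zero]
    with t (ht : 0 < t) hft
  simp only [Function.comp_apply, Real.rpow_ofNat]
  generalize tangentIntercept μ t⁻¹ = g, f t⁻¹ = y at hft ⊢
  field_simp

end LevyDensity

theorem IsRegularlyVarying.tangentIntercept_of_deriv_div_laplaceExponent {μ ψ' : ℝ → ℝ}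
    (hμ0 : ∀ t, 0 < t → 0 ≤ μ t) (hμ : AEStronglyMeasurable μ (volume.restrict (Ioi 0)))
    (hint : IntegrableOn (fun t ↦ min 1 t * μ t) (Ioi 0))
    (hψ : ∀ l, 0 < l → HasDerivAt (fun s ↦ s / laplaceExponent μ s) (ψ' l) l)
    (hψ'_rv : IsRegularlyVarying atTop ψ' (-1)) :
    IsRegularlyVarying atTop (tangentIntercept μ) 1 := by
  have hφ_pos : ∀ l, 0 < l → 0 < laplaceExponent μ l := by
    intro l hl
    refine (laplaceExponent_nonneg hμ0 hl).lt_of_ne' fun hzero ↦ ?_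
    obtain ⟨x, hx, hψ'x⟩ := ((eventually_gt_atTop 0).and hψ'_rv.eventually_ne_zero).exists
    refine hψ'x ((hψ x hx).unique ?_)
    simpa only [laplaceExponent_eq_zero_of_eq_zero hμ0 hμ hint hl hzero, div_zero] using
      hasDerivAt_const x (0 : ℝ)
  exact sub_mul_deriv hφ_pos (fun _ ↦ hasDerivAt_laplaceExponent hμ hint)
    (fun _ ↦ tangentIntercept_nonneg hμ0 hμ hint) hψ hψ'_rv

theorem levy_density_asymp_alpha_two_general
    (μ φ φ' : ℝ → ℝ)
    (hμ0 : ∀ t, 0 < t → 0 ≤ μ t)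
    (hμdec : ∀ s t, 0 < s → s ≤ t → μ t ≤ μ s)
    (hμint : IntegrableOn (fun t ↦ min 1 t * μ t) (Ioi 0))
    (hφ : ∀ l, 0 < l → φ l = ∫ t in Ioi (0 : ℝ), (1 - Real.exp (-(l * t))) * μ t)
    (hφ' : ∀ l, 0 < l → φ' l = ∫ t in Ioi (0 : ℝ), t * Real.exp (-(l * t)) * μ t)
    (ψ' : ℝ → ℝ)
    (hψ' : ∀ l, 0 < l → HasDerivAt (fun s ↦ s / φ s) (ψ' l) l)
    (hA4 : ∀ x, 0 < x → Tendsto (fun l ↦ ψ' (l * x) / ψ' l) atTop (𝓝 x⁻¹)) :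
    Tendsto (fun t ↦ μ t * t ^ 2 / (t * φ t⁻¹ - φ' t⁻¹)) (𝓝[>] (0 : ℝ)) (𝓝 1) := by
  have hμ : AntitoneOn μ (Ioi 0) := fun s hs t _ hst ↦ hμdec s t hs hst
  have hμ_meas := aestronglyMeasurable_of_antitoneOn hμ
  have hφ'_eq : ∀ l, 0 < l → φ' l = laplaceTransform (fun t ↦ t * μ t) l := fun l hl ↦
    (hφ' l hl).trans (by simp only [laplaceTransform, mul_assoc, mul_left_comm])
  have hψ : ∀ l, 0 < l → HasDerivAt (fun s ↦ s / laplaceExponent μ s) (ψ' l) l := by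
    refine fun l hl ↦ (hψ' l hl).congr_of_eventuallyEq ?_
    filter_upwards [eventually_gt_nhds hl] with s hs
    rw [hφ s hs, laplaceExponent]
  have hψ'_rv : IsRegularlyVarying atTop ψ' (-1) := fun x hx ↦ by
    simpa only [Real.rpow_neg_one] using hA4 x hx
  have hg_rv := hψ'_rv.tangentIntercept_of_deriv_div_laplaceExponent hμ0 hμ_meas hμint hψ
  refine (hg_rv.tendsto_levyDensity_mul_div_tangentIntercept hμ0 hμ hμint).congr' ?_
  filter_upwards [self_mem_nhdsWithin] with t (ht : 0 < t)
  have hgap : t * φ t⁻¹ - φ' t⁻¹ = t * tangentIntercept μ t⁻¹ := by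
    rw [hφ _ (inv_pos.2 ht), hφ'_eq _ (inv_pos.2 ht), tangentIntercept, mul_sub,
      mul_inv_cancel_left₀ ht.ne', laplaceExponent]
  rw [hgap, sq, ← mul_assoc, mul_comm t, mul_div_mul_right _ _ ht.ne']

/-- Under (A-1) with `α = 2` (`φ'` slowly varying), (A-3) and (A-4), the Lévy density
satisfies `μ(t) ∼ t⁻² (t φ(t⁻¹) - φ'(t⁻¹))` as `t → 0+`. -/
theorem levy_density_asymp_alpha_two
    (μ φ φ' : ℝ → ℝ)
    (hμpos : ∀ t, 0 < t → 0 < μ t)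
    (hμdec : ∀ s t, 0 < s → s ≤ t → μ t ≤ μ s)
    (hμint : IntegrableOn (fun t => min 1 t * μ t) (Ioi 0))
    (hφ : ∀ l, 0 < l → φ l = ∫ t in Ioi (0:ℝ), (1 - Real.exp (-(l * t))) * μ t)
    (hφ' : ∀ l, 0 < l → φ' l = ∫ t in Ioi (0:ℝ), t * Real.exp (-(l * t)) * μ t)
    (hA1 : ∀ x, 0 < x →
      Tendsto (fun l => φ' (l * x) / φ' l) atTop (𝓝 (1 : ℝ)))
    (u : ℝ → ℝ)
    (hupos : ∀ t, 0 < t → 0 < u t)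
    (hudec : ∀ s t, 0 < s → s ≤ t → u t ≤ u s)
    (hu : ∀ l, 0 < l → ∫ t in Ioi (0:ℝ), Real.exp (-(l * t)) * u t = 1 / φ l)
    (ψ' : ℝ → ℝ)
    (hψ' : ∀ l, 0 < l → HasDerivAt (fun s => s / φ s) (ψ' l) l)
    (hA4 : ∀ x, 0 < x →
      Tendsto (fun l => ψ' (l * x) / ψ' l) atTop (𝓝 x⁻¹)) :
    Tendsto (fun t => μ t * t ^ 2 / (t * φ t⁻¹ - φ' t⁻¹)) (𝓝[>] (0:ℝ)) (𝓝 1) := by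
  exact levy_density_asymp_alpha_two_general μ φ φ' (fun t ht ↦ (hμpos t ht).le) hμdec hμint
    hφ hφ' ψ' hψ' hA4
end
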